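/- arXiv:2404.09746 — 4 statements merged into one kernel-verified Lean document; each statement's English description precedes it below -/
import Mathlib

section
/- Gradient flow as a minimum-norm point algorithm (Theorem 3.12(1)): suppose κ* := inf_{y ∈ ℝⁿ} ‖∇f(y)‖ > 0 and let x : [0,∞) → ℝⁿ be a gradient-flow trajectory of f. Then the closure of the gradient image {∇f(y) : y ∈ ℝⁿ} is a convex set and contains a unique point p* of minimum Euclidean norm; moreover ∇f(x(t)) converges to p* and x(t)/t converges to −p* as t → ∞. -/
open Filter
open scoped RealInnerProductSpace

/-!
The closure of the range of `∇f` equals the closure of the domain of the Fenchel conjugate of `f`,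
which is convex: the gradient inequality gives one inclusion, and if `f - ⟪p, ·⟫` is bounded
below, minimizing `f - ⟪p, ·⟫ + ε / 2 * ‖·‖ ^ 2` and letting `ε → 0` gives the other. Along the
flow `‖∇f (x t)‖` is nonincreasing, because flows of monotone operators are contractions, so
`t * (f (x t) - f z) + ‖x t - z‖ ^ 2 / 2` decreases at rate at least `t * ‖∇f (x T)‖ ^ 2` on
`[0, T]`. This yields `‖∇f (x T)‖ ^ 2 ≤ ‖∇f z‖ ^ 2 + ‖x 0 - z‖ ^ 2 / T ^ 2` for every `z`. Hence
`‖∇f (x t)‖` tends to the minimal norm, and in a convex set norm-minimizing families converge to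
the point of minimal norm. Averaging the velocity gives the limit of `x t / t`.
-/

open Set Topology Asymptotics

section StrongConvexity

variable {E : Type*} [NormedAddCommGroup E] [NormedSpace ℝ E] {s : Set E} {F : E → ℝ} {m : ℝ}

lemma norm_sub_sq_le_of_strongConvexOn (hF : StrongConvexOn s m F) {c : ℝ}
    (hc : ∀ w ∈ s, c ≤ F w) {u v : E} (hu : u ∈ s) (hv : v ∈ s) :
    m / 4 * ‖u - v‖ ^ 2 ≤ (F u - c) + (F v - c) := by
  have half_nonneg : (0 : ℝ) ≤ 1 / 2 := by norm_num
  have half_add_half : (1 / 2 : ℝ) + 1 / 2 = 1 := by norm_num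
  have lower := hc _ (hF.1 hu hv half_nonneg half_nonneg half_add_half)
  have upper := hF.2 hu hv half_nonneg half_nonneg half_add_half
  simp only [smul_eq_mul] at upper
  linarith

theorem exists_isMinOn_of_strongConvexOn (hF : StrongConvexOn s m F) (hm : 0 < m)
    (hs : IsComplete s) (hne : s.Nonempty) (hlsc : LowerSemicontinuousOn F s)
    (hbdd : BddBelow (F '' s)) : ∃ z ∈ s, IsMinOn F s z := by
  have sInf_le : ∀ w ∈ s, sInf (F '' s) ≤ F w := fun w hw =>
    csInf_le hbdd (mem_image_of_mem F hw)
  obtain ⟨a, ha_anti, ha_lim, ha_mem⟩ := exists_seq_tendsto_sInf (hne.image F) hbdd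
  choose w hw hFw using ha_mem
  let radius : ℕ → ℝ := fun N => √(8 / m * (a N - sInf (F '' s)))
  have dist_le : ∀ i j N, N ≤ i → N ≤ j → dist (w i) (w j) ≤ radius N := by
    intro i j N hi hj
    have h := norm_sub_sq_le_of_strongConvexOn hF sInf_le (hw i) (hw j)
    rw [hFw, hFw] at h
    rw [dist_eq_norm]
    refine Real.le_sqrt_of_sq_le ?_
    rw [div_mul_eq_mul_div, le_div_iff₀ hm]
    linarith [ha_anti hi, ha_anti hj]
  have radius_lim : Tendsto radius atTop (𝓝 0) := by
    simpa using ((ha_lim.sub_const (sInf (F '' s))).const_mul (8 / m)).sqrt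
  obtain ⟨z, hz, hwz⟩ := cauchySeq_tendsto_of_isComplete hs hw
    (cauchySeq_of_le_tendsto_0 radius dist_le radius_lim)
  have hwz' : Tendsto w atTop (𝓝[s] z) :=
    tendsto_nhdsWithin_iff.2 ⟨hwz, .of_forall hw⟩
  have hFz : F z ≤ sInf (F '' s) := by
    refine le_of_forall_lt fun y hy => ?_
    obtain ⟨y', hyy', hy'⟩ := exists_between hy
    refine hyy'.trans_le (ge_of_tendsto ha_lim ?_)
    filter_upwards [hwz'.eventually (hlsc z hz y' hy')] with k hk
    exact (hFw k) ▸ hk.le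
  exact ⟨z, hz, fun v hv => hFz.trans (sInf_le v hv)⟩

end StrongConvexity

section GradientRange

variable {E : Type*} [NormedAddCommGroup E] [InnerProductSpace ℝ E] {f : E → ℝ}

/-- The effective domain of the Fenchel conjugate `p ↦ ⨆ z, ⟪p, z⟫ - f z`, that is, the set of
slopes `p` of affine minorants of `f`. It is the convex set sharing its closure with the range of
the gradient. Finiteness of the supremum is encoded as boundedness below of `f - ⟪p, ·⟫`. -/
def conjugateDomain (f : E → ℝ) : Set E :=
  {p | BddBelow (range fun z => f z - ⟪p, z⟫)}

lemma convex_conjugateDomain (f : E → ℝ) : Convex ℝ (conjugateDomain f) := by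
  rintro p ⟨c, hc⟩ q ⟨d, hd⟩ a b ha hb hab
  refine ⟨a * c + b * d, ?_⟩
  rintro _ ⟨z, rfl⟩
  calc a * c + b * d ≤ a * (f z - ⟪p, z⟫) + b * (f z - ⟪q, z⟫) := by
        gcongr
        exacts [hc (mem_range_self z), hd (mem_range_self z)]
    _ = (a + b) * f z - ⟪a • p + b • q, z⟫ := by
        rw [inner_add_left, real_inner_smul_left, real_inner_smul_left]
        ring
    _ = f z - ⟪a • p + b • q, z⟫ := by rw [hab, one_mul]

variable [CompleteSpace E]

lemma hasDerivWithinAt_comp_of_hasGradientWithinAt {s : Set ℝ} {u : Set E} {c : ℝ → E} {c' g : E}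
    {t : ℝ} (hf : HasGradientWithinAt f g u (c t)) (hc : HasDerivWithinAt c c' s t)
    (hmaps : MapsTo c s u) : HasDerivWithinAt (fun r => f (c r)) ⟪g, c'⟫ s t :=
  hf.hasFDerivWithinAt.comp_hasDerivWithinAt t hc hmaps

lemma add_inner_le_of_convexOn {s : Set E} (hf : ConvexOn ℝ s f) {y z g : E} (hy : y ∈ s)
    (hz : z ∈ s) (hg : HasGradientWithinAt f g s y) : f y + ⟪g, z - y⟫ ≤ f z := by
  let line : ℝ →ᵃ[ℝ] E := AffineMap.lineMap y z
  have hline : HasDerivWithinAt line (z - y) (line ⁻¹' s) 0 := AffineMap.hasDerivWithinAt_lineMap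
  have hderiv : HasDerivWithinAt (f ∘ line) ⟪g, z - y⟫ (line ⁻¹' s) 0 :=
    hasDerivWithinAt_comp_of_hasGradientWithinAt (by simpa [line] using hg) hline
      (mapsTo_preimage line s)
  have hslope := (hf.comp_affineMap line).le_slope_of_hasDerivWithinAt
    (by simpa [line] using hy) (by simpa [line] using hz) one_pos hderiv
  simp only [slope_def_field, Function.comp_apply, line, AffineMap.lineMap_apply_zero,
    AffineMap.lineMap_apply_one, sub_zero, div_one] at hslope
  linarith

lemma add_inner_gradient_le (hconv : ConvexOn ℝ univ f) {y : E} (hf : DifferentiableAt ℝ f y)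
    (z : E) : f y + ⟪gradient f y, z - y⟫ ≤ f z :=
  add_inner_le_of_convexOn hconv (mem_univ y) (mem_univ z)
    (hasGradientWithinAt_univ.2 hf.hasGradientAt)

lemma hasGradientAt_half_mul_norm_sq (ε : ℝ) (z : E) :
    HasGradientAt (fun w : E => ε / 2 * ‖w‖ ^ 2) (ε • z) z := by
  rw [hasGradientAt_iff_hasFDerivAt]
  refine ((hasStrictFDerivAt_norm_sq z).hasFDerivAt.const_mul (ε / 2)).congr_fderiv ?_
  ext v
  simp only [smul_apply, coe_innerSL_apply, nsmul_eq_mul, Nat.cast_ofNat, smul_eq_mul, map_smul,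
    InnerProductSpace.toDual_apply_apply]
  ring

lemma gradient_sub_inner {z : E} (hf : DifferentiableAt ℝ f z) (p : E) :
    gradient (fun w => f w - ⟪p, w⟫) z = gradient f z - p := by
  refine HasGradientAt.gradient (hasGradientAt_iff_hasFDerivAt.2 ?_)
  rw [map_sub, toDual_gradient]
  exact hf.hasFDerivAt.sub (innerSL ℝ p).hasFDerivAt

lemma exists_gradient_eq_neg_smul (hconv : ConvexOn ℝ univ f) (hf : Differentiable ℝ f)
    (hbdd : BddBelow (range f)) {ε : ℝ} (hε : 0 < ε) :
    ∃ z, gradient f z = -(ε • z) ∧ f z + ε / 2 * ‖z‖ ^ 2 ≤ f 0 := by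
  let F : E → ℝ := fun w => f w + ε / 2 * ‖w‖ ^ 2
  have F_strong : StrongConvexOn univ ε F :=
    strongConvexOn_iff_convex.2 (by simpa [F] using hconv)
  have F_cont : Continuous F := by
    have := hf.continuous
    fun_prop
  have F_bdd : BddBelow (F '' univ) := by
    obtain ⟨c, hc⟩ := hbdd
    refine ⟨c, ?_⟩
    rintro _ ⟨w, -, rfl⟩
    exact (hc (mem_range_self w)).trans (le_add_of_nonneg_right (by positivity))
  obtain ⟨z, -, hz⟩ := exists_isMinOn_of_strongConvexOn F_strong hε isClosed_univ.isComplete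
    univ_nonempty (F_cont.lowerSemicontinuous.lowerSemicontinuousOn univ) F_bdd
  have F_deriv := (hf z).hasGradientAt.hasFDerivAt.add
    (hasGradientAt_half_mul_norm_sq ε z).hasFDerivAt
  have stationary := (hz.isLocalMin univ_mem).hasFDerivAt_eq_zero F_deriv
  rw [← map_add, map_eq_zero_iff _ (InnerProductSpace.toDual ℝ E).injective] at stationary
  exact ⟨z, eq_neg_of_add_eq_zero_left stationary, by simpa [F] using hz (mem_univ 0)⟩

theorem exists_norm_gradient_lt_of_bddBelow (hconv : ConvexOn ℝ univ f)
    (hf : Differentiable ℝ f) (hbdd : BddBelow (range f)) {δ : ℝ} (hδ : 0 < δ) :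
    ∃ z, ‖gradient f z‖ < δ := by
  obtain ⟨c, hc⟩ := hbdd
  have gap_nonneg : 0 ≤ f 0 - c := sub_nonneg.2 (hc (mem_range_self 0))
  let ε : ℝ := δ ^ 2 / (2 * (f 0 - c + 1))
  have hε : 0 < ε := by positivity
  have hεδ : ε * (2 * (f 0 - c + 1)) = δ ^ 2 := div_mul_cancel₀ _ (by positivity)
  obtain ⟨z, hgrad, hval⟩ := exists_gradient_eq_neg_smul hconv hf ⟨c, hc⟩ hε
  refine ⟨z, lt_of_pow_lt_pow_left₀ 2 hδ.le ?_⟩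
  calc ‖gradient f z‖ ^ 2 = 2 * ε * (ε / 2 * ‖z‖ ^ 2) := by
        rw [hgrad, norm_neg, norm_smul, Real.norm_of_nonneg hε.le]
        ring
    _ ≤ 2 * ε * (f 0 - c) := by
        gcongr
        linarith [hc (mem_range_self z)]
    _ < δ ^ 2 := by linarith

lemma range_gradient_subset_conjugateDomain (hconv : ConvexOn ℝ univ f)
    (hf : Differentiable ℝ f) : range (gradient f) ⊆ conjugateDomain f := by
  rintro _ ⟨y, rfl⟩
  refine ⟨f y - ⟪gradient f y, y⟫, ?_⟩
  rintro _ ⟨z, rfl⟩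
  have h := add_inner_gradient_le hconv (hf y) z
  rw [inner_sub_right] at h
  linarith

lemma conjugateDomain_subset_closure_range_gradient (hconv : ConvexOn ℝ univ f)
    (hf : Differentiable ℝ f) : conjugateDomain f ⊆ closure (range (gradient f)) := by
  intro p hp
  have tilted_conv : ConvexOn ℝ univ fun z => f z - ⟪p, z⟫ :=
    hconv.sub ((innerSL ℝ p).toLinearMap.concaveOn convex_univ)
  have tilted_diff : Differentiable ℝ fun z => f z - ⟪p, z⟫ :=
    hf.sub (innerSL ℝ p).differentiable
  refine Metric.mem_closure_range_iff.2 fun δ hδ => ?_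
  obtain ⟨z, hz⟩ := exists_norm_gradient_lt_of_bddBelow tilted_conv tilted_diff hp hδ
  rw [gradient_sub_inner (hf z), ← dist_eq_norm, dist_comm] at hz
  exact ⟨z, hz⟩

theorem closure_range_gradient_eq_closure_conjugateDomain (hconv : ConvexOn ℝ univ f)
    (hf : Differentiable ℝ f) : closure (range (gradient f)) = closure (conjugateDomain f) :=
  (closure_mono (range_gradient_subset_conjugateDomain hconv hf)).antisymm
    (closure_minimal (conjugateDomain_subset_closure_range_gradient hconv hf) isClosed_closure)

theorem convex_closure_range_gradient (hconv : ConvexOn ℝ univ f) (hf : Differentiable ℝ f) :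
    Convex ℝ (closure (range (gradient f))) := by
  rw [closure_range_gradient_eq_closure_conjugateDomain hconv hf]
  exact (convex_conjugateDomain f).closure

end GradientRange

section MinimumNormPoint

variable {E : Type*} [NormedAddCommGroup E] {K : Set E} {p q : E}

lemma isMinOn_norm_iff_norm_zero_sub_eq_iInf (hp : p ∈ K) :
    IsMinOn (‖·‖) K p ↔ ‖0 - p‖ = ⨅ w : K, ‖0 - (w : E)‖ := by
  simp only [zero_sub, norm_neg]
  refine ⟨fun hmin => (hmin.iInf_eq hp).symm, fun heq q hq => ?_⟩
  have norms_bdd : BddBelow (range fun w : K => ‖(w : E)‖) :=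
    ⟨0, forall_mem_range.2 fun w => norm_nonneg _⟩
  exact heq.trans_le (ciInf_le norms_bdd ⟨q, hq⟩)

variable [InnerProductSpace ℝ E]

lemma exists_isMinOn_norm (hne : K.Nonempty) (hcomplete : IsComplete K) (hconv : Convex ℝ K) :
    ∃ p ∈ K, IsMinOn (‖·‖) K p := by
  obtain ⟨p, hp, hdist⟩ := exists_norm_eq_iInf_of_complete_convex hne hcomplete hconv 0
  exact ⟨p, hp, (isMinOn_norm_iff_norm_zero_sub_eq_iInf hp).2 hdist⟩

lemma norm_sub_sq_add_norm_sq_le_of_isMinOn (hconv : Convex ℝ K) (hp : p ∈ K)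
    (hmin : IsMinOn (‖·‖) K p) (hq : q ∈ K) : ‖q - p‖ ^ 2 + ‖p‖ ^ 2 ≤ ‖q‖ ^ 2 := by
  have obtuse := (norm_eq_iInf_iff_real_inner_le_zero hconv hp).1
    ((isMinOn_norm_iff_norm_zero_sub_eq_iInf hp).1 hmin) q hq
  rw [zero_sub, inner_neg_left, inner_sub_right, real_inner_self_eq_norm_sq] at obtuse
  rw [norm_sub_sq_real, real_inner_comm]
  linarith

theorem tendsto_of_tendsto_norm_of_isMinOn (hconv : Convex ℝ K) (hp : p ∈ K)
    (hmin : IsMinOn (‖·‖) K p) {ι : Type*} {l : Filter ι} {g : ι → E} (hg : ∀ i, g i ∈ K)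
    (hnorm : Tendsto (fun i => ‖g i‖) l (𝓝 ‖p‖)) : Tendsto g l (𝓝 p) := by
  have gap_cont : Continuous fun r : ℝ => √(r ^ 2 - ‖p‖ ^ 2) := by fun_prop
  have hsqrt : Tendsto (fun i => √(‖g i‖ ^ 2 - ‖p‖ ^ 2)) l (𝓝 0) :=
    (gap_cont.tendsto' ‖p‖ 0 (by simp)).comp hnorm
  refine tendsto_iff_norm_sub_tendsto_zero.2 (squeeze_zero (fun i => norm_nonneg _) ?_ hsqrt)
  exact fun i => Real.le_sqrt_of_sq_le
    (le_sub_iff_add_le.2 (norm_sub_sq_add_norm_sq_le_of_isMinOn hconv hp hmin (hg i)))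

theorem eq_of_isMinOn_norm (hconv : Convex ℝ K) (hp : p ∈ K) (hpmin : IsMinOn (‖·‖) K p)
    (hq : q ∈ K) (hqmin : IsMinOn (‖·‖) K q) : q = p := by
  have norm_eq : ‖q‖ = ‖p‖ := le_antisymm (hqmin hp) (hpmin hq)
  have h := norm_sub_sq_add_norm_sq_le_of_isMinOn hconv hp hpmin hq
  rw [norm_eq, add_le_iff_nonpos_left, sq_nonpos_iff, norm_sub_eq_zero_iff] at h
  exact h

end MinimumNormPoint

section MonotoneFlow

variable {E : Type*} [NormedAddCommGroup E] [InnerProductSpace ℝ E] {A : E → E} {x y : ℝ → E}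

/-- Monotone operators in the sense of Minty, such as gradients of convex functions. -/
def IsMonotoneOperator (A : E → E) : Prop :=
  ∀ y z, 0 ≤ ⟪y - z, A y - A z⟫

lemma isMonotoneOperator_gradient [CompleteSpace E] {f : E → ℝ} (hconv : ConvexOn ℝ univ f)
    (hf : Differentiable ℝ f) : IsMonotoneOperator (gradient f) := by
  intro y z
  have hy := add_inner_gradient_le hconv (hf y) z
  have hz := add_inner_gradient_le hconv (hf z) y
  rw [← neg_sub, inner_neg_right] at hy
  rw [real_inner_comm, inner_sub_left]
  linarith

lemma isIntegralCurveOn_Ici_comp_add {v : E → E} (hx : IsIntegralCurveOn x (fun _ => v) (Ici 0))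
    {a : ℝ} (ha : 0 ≤ a) : IsIntegralCurveOn (fun t => x (t + a)) (fun _ => v) (Ici 0) :=
  (hx.comp_add a).mono fun t (ht : 0 ≤ t) => by
    simpa [mem_vadd_set_iff_neg_vadd_mem] using add_nonneg ha ht

theorem antitoneOn_norm_sub_of_isMonotoneOperator (hA : IsMonotoneOperator A) {s : Set ℝ}
    (hs : Convex ℝ s) (hx : IsIntegralCurveOn x (fun _ z => -A z) s)
    (hy : IsIntegralCurveOn y (fun _ z => -A z) s) :
    AntitoneOn (fun t => ‖x t - y t‖) s := by
  have hderiv : ∀ t ∈ s, HasDerivWithinAt (fun t => ‖x t - y t‖ ^ 2)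
      (2 * ⟪x t - y t, -A (x t) - -A (y t)⟫) s t := fun t ht => ((hx t ht).sub (hy t ht)).norm_sq
  have hanti : AntitoneOn (fun t => ‖x t - y t‖ ^ 2) s := by
    refine antitoneOn_of_hasDerivWithinAt_nonpos hs
      (fun t ht => (hderiv t ht).continuousWithinAt)
      (fun t ht => (hderiv t (interior_subset ht)).mono interior_subset) fun t _ => ?_
    rw [neg_sub_neg, ← neg_sub (A (x t)), inner_neg_right]
    linarith [hA (x t) (y t)]
  exact fun a ha b hb hab => le_of_sq_le_sq (hanti ha hb hab) (norm_nonneg _)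

theorem norm_apply_le_norm_apply_zero_of_isMonotoneOperator (hA : IsMonotoneOperator A)
    (hx : IsIntegralCurveOn x (fun _ z => -A z) (Ici 0)) {t : ℝ} (ht : 0 ≤ t) :
    ‖A (x t)‖ ≤ ‖A (x 0)‖ := by
  have zero_mem : (0 : ℝ) ∈ Ici 0 := self_mem_Ici
  have slope_at {y : ℝ → E} (hy : IsIntegralCurveOn y (fun _ z => -A z) (Ici 0)) :
      Tendsto (fun h => ‖slope y 0 h‖) (𝓝[>] 0) (𝓝 ‖A (y 0)‖) := by
    simpa using ((hasDerivWithinAt_iff_tendsto_slope' (by simp)).1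
      ((hy 0 zero_mem).mono Ioi_subset_Ici_self)).norm
  have shifted_slope := slope_at (isIntegralCurveOn_Ici_comp_add hx ht)
  rw [zero_add] at shifted_slope
  refine le_of_tendsto_of_tendsto shifted_slope (slope_at hx) ?_
  filter_upwards [self_mem_nhdsWithin] with h (hh : 0 < h)
  have contraction := antitoneOn_norm_sub_of_isMonotoneOperator hA (convex_Ici 0)
    (isIntegralCurveOn_Ici_comp_add hx hh.le) hx zero_mem ht ht
  simp only [slope_def_module, norm_smul, zero_add, add_comm h t] at contraction ⊢
  gcongr

theorem antitoneOn_norm_apply_of_isMonotoneOperator (hA : IsMonotoneOperator A)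
    (hx : IsIntegralCurveOn x (fun _ z => -A z) (Ici 0)) :
    AntitoneOn (fun t => ‖A (x t)‖) (Ici 0) := by
  intro a ha b _ hab
  simpa using norm_apply_le_norm_apply_zero_of_isMonotoneOperator hA
    (isIntegralCurveOn_Ici_comp_add hx ha) (sub_nonneg.2 hab)

end MonotoneFlow

section GradientFlow

variable {E : Type*} [NormedAddCommGroup E] [InnerProductSpace ℝ E] {f : E → ℝ} {x : ℝ → E}

/-- The Lyapunov function of the gradient flow of a convex function `f` relative to a reference
point `z`, which need not be a minimizer of `f`. -/
noncomputable def flowLyapunov (f : E → ℝ) (x : ℝ → E) (z : E) (t : ℝ) : ℝ :=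
  t * (f (x t) - f z) + ‖x t - z‖ ^ 2 / 2

variable [CompleteSpace E]

lemma hasDerivWithinAt_flowLyapunov {s : Set ℝ} {t : ℝ} (hf : DifferentiableAt ℝ f (x t))
    (hx : HasDerivWithinAt x (-gradient f (x t)) s t) (z : E) :
    HasDerivWithinAt (flowLyapunov f x z)
      (f (x t) + ⟪gradient f (x t), z - x t⟫ - f z - t * ‖gradient f (x t)‖ ^ 2) s t := by
  have hvalue : HasDerivWithinAt (fun r => f (x r)) ⟪gradient f (x t), -gradient f (x t)⟫ s t :=
    hasDerivWithinAt_comp_of_hasGradientWithinAt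
      (hasGradientWithinAt_univ.2 hf.hasGradientAt) hx (mapsTo_univ x s)
  have hdist := (hx.sub_const z).norm_sq.div_const 2
  refine (((hasDerivWithinAt_id t s).mul (hvalue.sub_const (f z))).add hdist).congr_deriv ?_
  rw [inner_neg_right, real_inner_self_eq_norm_sq, inner_neg_right, real_inner_comm,
    ← neg_sub (x t) z, inner_neg_right]
  simp only [id_eq]
  ring

lemma flowLyapunov_add_le (hconv : ConvexOn ℝ univ f) (hf : Differentiable ℝ f)
    (hx : IsIntegralCurveOn x (fun _ y => -gradient f y) (Ici 0)) (z : E) {T : ℝ} (hT : 0 ≤ T) :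
    flowLyapunov f x z T + T ^ 2 / 2 * ‖gradient f (x T)‖ ^ 2 ≤ ‖x 0 - z‖ ^ 2 / 2 := by
  have hderiv : ∀ t ∈ Icc 0 T, HasDerivWithinAt
      (fun t => flowLyapunov f x z t + t ^ 2 / 2 * ‖gradient f (x T)‖ ^ 2)
      (f (x t) + ⟪gradient f (x t), z - x t⟫ - f z - t * ‖gradient f (x t)‖ ^ 2
        + t * ‖gradient f (x T)‖ ^ 2) (Icc 0 T) t := fun t ht =>
    (hasDerivWithinAt_flowLyapunov (hf (x t)) (hx.mono Icc_subset_Ici_self t ht) z).add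
      ((((hasDerivWithinAt_id t _).pow 2).div_const 2).mul_const _ |>.congr_deriv (by simp))
  have hanti : AntitoneOn
      (fun t => flowLyapunov f x z t + t ^ 2 / 2 * ‖gradient f (x T)‖ ^ 2) (Icc 0 T) := by
    refine antitoneOn_of_hasDerivWithinAt_nonpos (convex_Icc 0 T)
      (fun t ht => (hderiv t ht).continuousWithinAt)
      (fun t ht => (hderiv t (interior_subset ht)).mono interior_subset) fun t ht => ?_
    obtain ⟨ht0, htT⟩ := interior_subset ht
    have hgrad : t * ‖gradient f (x T)‖ ^ 2 ≤ t * ‖gradient f (x t)‖ ^ 2 := by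
      gcongr
      exact antitoneOn_norm_apply_of_isMonotoneOperator (isMonotoneOperator_gradient hconv hf) hx
        ht0 hT htT
    linarith [add_inner_gradient_le hconv (hf (x t)) z]
  simpa [flowLyapunov] using hanti (left_mem_Icc.2 hT) (right_mem_Icc.2 hT) hT

lemma neg_le_flowLyapunov (hconv : ConvexOn ℝ univ f) {z : E} (hf : DifferentiableAt ℝ f z)
    (x : ℝ → E) {T : ℝ} (hT : 0 ≤ T) :
    -(T ^ 2 / 2 * ‖gradient f z‖ ^ 2) ≤ flowLyapunov f x z T := by
  have hvalue : T * ⟪gradient f z, x T - z⟫ ≤ T * (f (x T) - f z) := by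
    gcongr
    linarith [add_inner_gradient_le hconv hf (x T)]
  have hsquare : 0 ≤ ‖T • gradient f z + (x T - z)‖ ^ 2 := sq_nonneg _
  rw [norm_add_sq_real, real_inner_smul_left, norm_smul, mul_pow, Real.norm_eq_abs, sq_abs]
    at hsquare
  rw [flowLyapunov]
  linarith

theorem norm_gradient_sq_le_add_div (hconv : ConvexOn ℝ univ f) (hf : Differentiable ℝ f)
    (hx : IsIntegralCurveOn x (fun _ y => -gradient f y) (Ici 0)) (z : E) {T : ℝ} (hT : 0 < T) :
    ‖gradient f (x T)‖ ^ 2 ≤ ‖gradient f z‖ ^ 2 + ‖x 0 - z‖ ^ 2 / T ^ 2 := by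
  have upper := flowLyapunov_add_le hconv hf hx z hT.le
  have lower := neg_le_flowLyapunov hconv (hf z) x hT.le
  rw [← sub_le_iff_le_add', le_div_iff₀ (by positivity)]
  linarith

theorem tendsto_norm_gradient_of_isGLB (hconv : ConvexOn ℝ univ f) (hf : Differentiable ℝ f)
    (hx : IsIntegralCurveOn x (fun _ y => -gradient f y) (Ici 0)) {κ : ℝ}
    (hκ : IsGLB (range fun z => ‖gradient f z‖) κ) :
    Tendsto (fun t => ‖gradient f (x t)‖) atTop (𝓝 κ) := by
  refine tendsto_order.2 ⟨fun b hb => .of_forall fun t => hb.trans_le (hκ.1 ⟨x t, rfl⟩),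
    fun b hb => ?_⟩
  obtain ⟨_, ⟨z, rfl⟩, -, hz⟩ := hκ.exists_between hb
  have bound_lim : Tendsto (fun t : ℝ => ‖gradient f z‖ ^ 2 + ‖x 0 - z‖ ^ 2 / t ^ 2) atTop
      (𝓝 (‖gradient f z‖ ^ 2)) := by
    simpa using ((tendsto_pow_atTop two_ne_zero).const_div_atTop (‖x 0 - z‖ ^ 2)).const_add
      (‖gradient f z‖ ^ 2)
  have hz_sq : ‖gradient f z‖ ^ 2 < b ^ 2 := by gcongr
  filter_upwards [bound_lim.eventually_lt_const hz_sq, eventually_gt_atTop 0] with t hlt ht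
  exact lt_of_pow_lt_pow_left₀ 2 ((norm_nonneg _).trans hz.le)
    ((norm_gradient_sq_le_add_div hconv hf hx z ht).trans_lt hlt)

end GradientFlow

section AverageVelocity

variable {E : Type*} [NormedAddCommGroup E] [NormedSpace ℝ E] {x g : ℝ → E}

lemma isLittleO_id_of_tendsto_deriv_zero (hx : ∀ᶠ t in atTop, HasDerivAt x (g t) t)
    (hg : Tendsto g atTop (𝓝 0)) : x =o[atTop] (id : ℝ → ℝ) := by
  refine isLittleO_iff.2 fun ε hε => ?_
  have small : ∀ᶠ t in atTop, ‖g t‖ < ε / 2 :=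
    (tendsto_zero_iff_norm_tendsto_zero.1 hg).eventually_lt_const (half_pos hε)
  obtain ⟨S, hS⟩ := eventually_atTop.1 (hx.and small)
  filter_upwards [eventually_ge_atTop S, eventually_ge_atTop 0,
    eventually_ge_atTop (2 / ε * ‖x S‖ - S)] with t hSt ht hMt
  have increment : ‖x t - x S‖ ≤ ε / 2 * ‖t - S‖ :=
    (convex_Ici S).norm_image_sub_le_of_norm_hasDerivWithin_le
      (fun u hu => (hS u hu).1.hasDerivWithinAt) (fun u hu => (hS u hu).2.le)
      self_mem_Ici hSt
  rw [Real.norm_of_nonneg (sub_nonneg.2 hSt)] at increment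
  have start : ‖x S‖ ≤ ε / 2 * (t + S) := by
    rw [sub_le_iff_le_add, div_mul_eq_mul_div, div_le_iff₀ hε] at hMt
    linarith
  calc ‖x t‖ ≤ ‖x S‖ + ‖x t - x S‖ := norm_le_norm_add_norm_sub' _ _
    _ ≤ ε / 2 * (t + S) + ε / 2 * (t - S) := add_le_add start increment
    _ = ε * ‖id t‖ := by
        rw [id_eq, Real.norm_of_nonneg ht]
        ring

theorem tendsto_inv_smul_of_tendsto_deriv {v : E} (hx : ∀ᶠ t in atTop, HasDerivAt x (g t) t)
    (hg : Tendsto g atTop (𝓝 v)) : Tendsto (fun t => t⁻¹ • x t) atTop (𝓝 v) := by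
  have hderiv : ∀ᶠ t in atTop, HasDerivAt (fun t => x t - t • v) (g t - v) t := by
    filter_upwards [hx] with t ht
    exact (ht.sub ((hasDerivAt_id t).smul_const v)).congr_deriv (by rw [one_smul])
  have hzero : Tendsto (fun t => g t - v) atTop (𝓝 0) := by simpa using hg.sub_const v
  have hlim := (isLittleO_id_of_tendsto_deriv_zero hderiv hzero).tendsto_inv_smul_nhds_zero
  refine tendsto_sub_nhds_zero_iff.1 (hlim.congr' ?_)
  filter_upwards [eventually_ne_atTop 0] with t ht
  rw [id_eq, smul_sub, inv_smul_smul₀ ht]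

end AverageVelocity

theorem gradient_flow_minimum_norm_point_general {E : Type*} [NormedAddCommGroup E]
    [InnerProductSpace ℝ E] [CompleteSpace E] {f : E → ℝ} (hconv : ConvexOn ℝ univ f)
    (hf : Differentiable ℝ f) {x : ℝ → E}
    (hx : IsIntegralCurveOn x (fun _ y => -gradient f y) (Ici 0)) :
    Convex ℝ (closure (range (gradient f))) ∧
    ∃ p ∈ closure (range (gradient f)),
      (∀ q ∈ closure (range (gradient f)), ‖p‖ ≤ ‖q‖) ∧
      (∀ p' ∈ closure (range (gradient f)),
        (∀ q ∈ closure (range (gradient f)), ‖p'‖ ≤ ‖q‖) → p' = p) ∧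
      Tendsto (fun t => gradient f (x t)) atTop (𝓝 p) ∧
      Tendsto (fun t => t⁻¹ • x t) atTop (𝓝 (-p)) := by
  have hK := convex_closure_range_gradient hconv hf
  obtain ⟨p, hp, hmin⟩ := exists_isMinOn_norm (range_nonempty (gradient f)).closure
    isClosed_closure.isComplete hK
  have hmem : ∀ z, gradient f z ∈ closure (range (gradient f)) := fun z =>
    subset_closure (mem_range_self z)
  have hGLB : IsGLB (range fun z => ‖gradient f z‖) ‖p‖ :=
    isGLB_of_mem_closure (forall_mem_range.2 fun z => hmin (hmem z))
      (map_mem_closure continuous_norm hp (forall_mem_range.2 fun z => mem_range_self z))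
  have hgrad : Tendsto (fun t => gradient f (x t)) atTop (𝓝 p) :=
    tendsto_of_tendsto_norm_of_isMinOn hK hp hmin (fun t => hmem (x t))
      (tendsto_norm_gradient_of_isGLB hconv hf hx hGLB)
  have hderiv : ∀ᶠ t in atTop, HasDerivAt x (-gradient f (x t)) t := by
    filter_upwards [eventually_gt_atTop 0] with t ht
    exact (hx t ht.le).hasDerivAt (Ici_mem_nhds ht)
  exact ⟨hK, p, hp, fun q hq => hmin hq,
    fun p' hp' hp'min => eq_of_isMinOn_norm hK hp hmin hp' hp'min, hgrad,
    tendsto_inv_smul_of_tendsto_deriv hderiv hgrad.neg⟩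

/-- Gradient flow as a minimum-norm point algorithm (Theorem 3.12(1)): if
`κ* := inf_y ‖∇f(y)‖ > 0` and `x` is a gradient-flow trajectory of `f`, then the
closure of the gradient image `{∇f(y) : y ∈ ℝⁿ}` is convex and contains a unique
minimum-norm point `p*`; moreover `∇f(x(t)) → p*` and `x(t)/t → -p*` as `t → ∞`. -/
theorem gradient_flow_minimum_norm_point {n : ℕ} (hn : 1 ≤ n)
    (f : EuclideanSpace ℝ (Fin n) → ℝ)
    (hconv : ConvexOn ℝ Set.univ f) (hf : ContDiff ℝ 1 f)
    (hκ : 0 < ⨅ y, ‖gradient f y‖)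
    (x : ℝ → EuclideanSpace ℝ (Fin n))
    (hx : ∀ t : ℝ, 0 ≤ t → HasDerivAt x (-(gradient f (x t))) t) :
    Convex ℝ (closure (Set.range (gradient f))) ∧
    ∃ p : EuclideanSpace ℝ (Fin n),
      p ∈ closure (Set.range (gradient f)) ∧
      (∀ q ∈ closure (Set.range (gradient f)), ‖p‖ ≤ ‖q‖) ∧
      (∀ p' ∈ closure (Set.range (gradient f)),
        (∀ q ∈ closure (Set.range (gradient f)), ‖p'‖ ≤ ‖q‖) → p' = p) ∧
      Tendsto (fun t => gradient f (x t)) atTop (nhds p) ∧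
      Tendsto (fun t => t⁻¹ • x t) atTop (nhds (-p)) :=
  gradient_flow_minimum_norm_point_general hconv (hf.differentiable one_ne_zero)
    fun t ht => (hx t ht).hasDerivWithinAt
end

section
/- Gradient descent as a minimum-norm point algorithm (Theorem 3.12(2)): suppose κ* := inf_{y ∈ ℝⁿ} ‖∇f(y)‖ > 0 and let (x_i) be the gradient-descent sequence with step size 1/L from any initial point x₀. Let p* be the unique minimum-norm point of the closure of the gradient image {∇f(y) : y ∈ ℝⁿ} (this closure is convex, so p* exists and is unique). Then ∇f(x_i) converges to p* and x_i/i converges to −p*/L as i → ∞. -/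
open Filter
open scoped RealInnerProductSpace

/-!
Write `g` for the gradient of `f`. For every reference point `z`, the energy
`2 L k (f (x k) - f z) + L² ‖x k - z‖² + k² ‖g (x k)‖²` does not increase along gradient descent.
Bounding `f (x k)` below by the tangent of `f` at `z` and completing the square gives
`‖g (x k)‖² + ‖L (x k - z) / k + g z‖² ≤ ‖g z‖² + (L ‖x 0 - z‖ / k)²`.
Choosing `z` with `g z` close to `p` forces `‖g (x k)‖ → ‖p‖` and `L x k / k → -p`. Letting `k → ∞`
for fixed `z` then yields `‖p‖² + ‖g z - p‖² ≤ ‖g z‖²`, and `z = x k` gives `g (x k) → p`.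
-/

open scoped Gradient Topology

section

variable {E : Type*} [NormedAddCommGroup E] [InnerProductSpace ℝ E] [CompleteSpace E]
  {f : E → ℝ} {L : ℝ}

theorem hasDerivAt_comp_add_smul_of_hasGradientAt {g x d : E} {t : ℝ}
    (hg : HasGradientAt f g (x + t • d)) :
    HasDerivAt (fun s : ℝ => f (x + s • d)) ⟪g, d⟫ t := by
  have hline : HasDerivAt (fun s : ℝ => x + s • d) d t := by
    simpa using ((hasDerivAt_id t).smul_const d).const_add x
  simpa [Function.comp_def] using hg.hasFDerivAt.comp_hasDerivAt t hline

theorem add_inner_sub_le_of_convexOn_of_hasGradientAt {s : Set E} {g x y : E}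
    (hf : ConvexOn ℝ s f) (hx : x ∈ s) (hy : y ∈ s) (hg : HasGradientAt f g x) :
    f x + ⟪g, y - x⟫ ≤ f y := by
  have hconv : ConvexOn ℝ (AffineMap.lineMap x y ⁻¹' s) fun t : ℝ => f (x + t • (y - x)) := by
    simpa [Function.comp_def, AffineMap.lineMap_apply, add_comm] using
      hf.comp_affineMap (AffineMap.lineMap x y : ℝ →ᵃ[ℝ] E)
  have hderiv : HasDerivAt (fun t : ℝ => f (x + t • (y - x))) ⟪g, y - x⟫ 0 :=
    hasDerivAt_comp_add_smul_of_hasGradientAt (by simpa using hg)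
  have hslope := hconv.le_slope_of_hasDerivAt (x := 0) (y := 1) (by simpa using hx)
    (by simpa using hy) one_pos hderiv
  simp only [slope_def_field, one_smul, zero_smul, add_sub_cancel, add_zero, sub_zero,
    div_one] at hslope
  linarith

theorem le_add_inner_sub_add_sq_of_norm_gradient_sub_le (hdiff : Differentiable ℝ f)
    (hsmooth : ∀ y z, ‖∇ f y - ∇ f z‖ ≤ L * ‖y - z‖) (x y : E) :
    f y ≤ f x + ⟪∇ f x, y - x⟫ + L / 2 * ‖y - x‖ ^ 2 := by
  set d := y - x with hd
  have hf (t : ℝ) : HasDerivAt (fun s : ℝ => f (x + s • d)) ⟪∇ f (x + t • d), d⟫ t :=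
    hasDerivAt_comp_add_smul_of_hasGradientAt (hdiff _).hasGradientAt
  have hquad (t : ℝ) : HasDerivAt
      (fun s : ℝ => f x + s * ⟪∇ f x, d⟫ + s ^ 2 * (L / 2 * ‖d‖ ^ 2))
      (⟪∇ f x, d⟫ + t * (L * ‖d‖ ^ 2)) t := by
    refine ((((hasDerivAt_id t).mul_const _).const_add (f x)).add
      ((hasDerivAt_pow 2 t).mul_const _)).congr_deriv ?_
    push_cast
    ring
  have hderiv_le (t : ℝ) (ht : 0 ≤ t) :
      ⟪∇ f (x + t • d), d⟫ ≤ ⟪∇ f x, d⟫ + t * (L * ‖d‖ ^ 2) := by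
    rw [← sub_le_iff_le_add', ← inner_sub_left]
    calc ⟪∇ f (x + t • d) - ∇ f x, d⟫
        ≤ ‖∇ f (x + t • d) - ∇ f x‖ * ‖d‖ := real_inner_le_norm _ _
      _ ≤ L * ‖x + t • d - x‖ * ‖d‖ := by gcongr; exact hsmooth _ _
      _ = t * (L * ‖d‖ ^ 2) := by
        rw [add_sub_cancel_left, norm_smul, Real.norm_of_nonneg ht]
        ring
  have hle := image_le_of_deriv_right_le_deriv_boundary (a := 0) (b := 1)
    (fun t _ => (hf t).continuousAt.continuousWithinAt) (fun t _ => (hf t).hasDerivWithinAt)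
    (by simp) (fun t _ => (hquad t).continuousAt.continuousWithinAt)
    (fun t _ => (hquad t).hasDerivWithinAt) (fun t ht => hderiv_le t ht.1)
    (Set.right_mem_Icc.2 zero_le_one)
  simpa [hd] using hle

/-- Convex `L`-smooth functions, i.e. differentiable convex functions on the whole space with
`L`-Lipschitz gradient. The constant is a positive real because `1 / L` is the step size of
gradient descent. -/
structure IsConvexSmooth (f : E → ℝ) (L : ℝ) : Prop where
  pos : 0 < L
  convexOn : ConvexOn ℝ Set.univ f
  differentiable : Differentiable ℝ f
  norm_gradient_sub_le (y z : E) : ‖∇ f y - ∇ f z‖ ≤ L * ‖y - z‖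

/-- One step of gradient descent with step size `1 / L`. -/
noncomputable def gradientStep (f : E → ℝ) (L : ℝ) (x : E) : E :=
  x - (1 / L) • ∇ f x

/-- The Lyapunov function of gradient descent relative to a reference point `z`, evaluated at the
`k`-th iterate `x`. The point `z` need not be a minimiser of `f`, so the first summand may be
negative. -/
noncomputable def descentEnergy (f : E → ℝ) (L : ℝ) (z : E) (k : ℕ) (x : E) : ℝ :=
  2 * L * k * (f x - f z) + L ^ 2 * ‖x - z‖ ^ 2 + k ^ 2 * ‖∇ f x‖ ^ 2

theorem sub_gradientStep (f : E → ℝ) (L : ℝ) (x : E) :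
    x - gradientStep f L x = (1 / L) • ∇ f x :=
  sub_sub_cancel _ _

namespace IsConvexSmooth

theorem add_inner_sub_le (hf : IsConvexSmooth f L) (x y : E) : f x + ⟪∇ f x, y - x⟫ ≤ f y :=
  add_inner_sub_le_of_convexOn_of_hasGradientAt hf.convexOn (Set.mem_univ x) (Set.mem_univ y)
    (hf.differentiable x).hasGradientAt

theorem add_inner_sub_add_sq_le (hf : IsConvexSmooth f L) (x y : E) :
    f x + ⟪∇ f x, y - x⟫ + ‖∇ f y - ∇ f x‖ ^ 2 / (2 * L) ≤ f y := by
  have hL := hf.pos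
  set v := ∇ f y - ∇ f x with hv
  -- `w` minimises the quadratic upper bound at `y` for `f - ⟪∇ f x, ·⟫`.
  set w := y - (1 / L) • v with hw
  have hlower : f x + ⟪∇ f x, w - x⟫ ≤ f w := hf.add_inner_sub_le x w
  have hupper : f w ≤ f y + ⟪∇ f y, w - y⟫ + L / 2 * ‖w - y‖ ^ 2 :=
    le_add_inner_sub_add_sq_of_norm_gradient_sub_le hf.differentiable hf.norm_gradient_sub_le y w
  have hwy : w - y = -((1 / L) • v) := by rw [hw]; abel
  have hwx : w - x = (y - x) - (1 / L) • v := by rw [hw]; abel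
  have hgy : ⟪∇ f y, v⟫ = ⟪∇ f x, v⟫ + ‖v‖ ^ 2 := by
    rw [← real_inner_self_eq_norm_sq, ← inner_add_left, hv, add_sub_cancel]
  have hsq : L / 2 * (1 / L * ‖v‖) ^ 2 = ‖v‖ ^ 2 / (2 * L) := by field_simp
  have hhalf : 1 / L * ‖v‖ ^ 2 = 2 * (‖v‖ ^ 2 / (2 * L)) := by field_simp
  rw [hwx, inner_sub_right, real_inner_smul_right] at hlower
  rw [hwy, inner_neg_right, real_inner_smul_right, hgy, norm_neg, norm_smul,
    Real.norm_of_nonneg (by positivity), hsq] at hupper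
  linarith

theorem sq_norm_gradient_sub_le (hf : IsConvexSmooth f L) (x y : E) :
    ‖∇ f x - ∇ f y‖ ^ 2 ≤ L * ⟪∇ f x - ∇ f y, x - y⟫ := by
  have hL := hf.pos
  have hxy := hf.add_inner_sub_add_sq_le x y
  have hyx := hf.add_inner_sub_add_sq_le y x
  rw [norm_sub_rev (∇ f y), ← neg_sub x y, inner_neg_right] at hxy
  have hsum : 2 * (‖∇ f x - ∇ f y‖ ^ 2 / (2 * L)) ≤ ⟪∇ f x - ∇ f y, x - y⟫ := by
    rw [inner_sub_left]
    linarith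
  calc ‖∇ f x - ∇ f y‖ ^ 2 = L * (2 * (‖∇ f x - ∇ f y‖ ^ 2 / (2 * L))) := by field_simp
    _ ≤ L * ⟪∇ f x - ∇ f y, x - y⟫ := by gcongr

theorem norm_gradient_gradientStep_le (hf : IsConvexSmooth f L) (x : E) :
    ‖∇ f (gradientStep f L x)‖ ≤ ‖∇ f x‖ := by
  set g := ∇ f x
  set g' := ∇ f (gradientStep f L x)
  have hcoco : ‖g - g'‖ ^ 2 ≤ ⟪g - g', g⟫ := by
    have h := hf.sq_norm_gradient_sub_le x (gradientStep f L x)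
    rwa [sub_gradientStep, real_inner_smul_right, ← mul_assoc, mul_one_div_cancel hf.pos.ne',
      one_mul] at h
  have hinner : ‖g'‖ * ‖g'‖ ≤ ‖g'‖ * ‖g‖ :=
    calc ‖g'‖ * ‖g'‖ ≤ ⟪g', g⟫ := by
          rw [norm_sub_sq_real, inner_sub_left, real_inner_self_eq_norm_sq,
            real_inner_comm] at hcoco
          linarith
      _ ≤ ‖g'‖ * ‖g‖ := real_inner_le_norm _ _
  nlinarith [norm_nonneg g, norm_nonneg g']

theorem sq_norm_gradient_add_sq_norm_gradient_gradientStep_le (hf : IsConvexSmooth f L) (x : E) :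
    ‖∇ f x‖ ^ 2 + ‖∇ f (gradientStep f L x)‖ ^ 2 ≤ 2 * L * (f x - f (gradientStep f L x)) := by
  have hL := hf.pos
  have h := hf.add_inner_sub_add_sq_le (gradientStep f L x) x
  rw [sub_gradientStep, real_inner_smul_right, norm_sub_sq_real, real_inner_comm] at h
  field_simp at h
  linarith

theorem descentEnergy_succ_gradientStep_le (hf : IsConvexSmooth f L) (z : E) (k : ℕ) (x : E) :
    descentEnergy f L z (k + 1) (gradientStep f L x) ≤ descentEnergy f L z k x := by
  have hL := hf.pos
  have hdecrease := hf.sq_norm_gradient_add_sq_norm_gradient_gradientStep_le x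
  have hgradient : ‖∇ f (gradientStep f L x)‖ ^ 2 ≤ ‖∇ f x‖ ^ 2 := by
    gcongr
    exact hf.norm_gradient_gradientStep_le x
  have hconvex : L * (f x - f z) ≤ L * ⟪∇ f x, x - z⟫ := by
    have h := hf.add_inner_sub_le x z
    rw [← neg_sub, inner_neg_right] at h
    gcongr
    linarith
  have hdist : L ^ 2 * ‖gradientStep f L x - z‖ ^ 2 =
      L ^ 2 * ‖x - z‖ ^ 2 - 2 * (L * ⟪∇ f x, x - z⟫) + ‖∇ f x‖ ^ 2 := by
    have hstep : gradientStep f L x - z = (x - z) - (1 / L) • ∇ f x := by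
      rw [gradientStep]; abel
    rw [hstep, norm_sub_sq_real, real_inner_smul_right, norm_smul,
      Real.norm_of_nonneg (by positivity), real_inner_comm]
    field_simp
  have hdecrease_mul := mul_le_mul_of_nonneg_left hdecrease (by positivity : (0 : ℝ) ≤ k + 1)
  have hgradient_mul :=
    mul_le_mul_of_nonneg_left hgradient (by positivity : (0 : ℝ) ≤ k * (k + 1))
  rw [descentEnergy, descentEnergy, hdist]
  push_cast
  linarith

theorem descentEnergy_iterate_le (hf : IsConvexSmooth f L) (x z : E) (k : ℕ) :
    descentEnergy f L z k ((gradientStep f L)^[k] x) ≤ L ^ 2 * ‖x - z‖ ^ 2 := by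
  induction k with
  | zero => simp [descentEnergy]
  | succ k ih =>
    rw [Function.iterate_succ_apply']
    exact (hf.descentEnergy_succ_gradientStep_le z k _).trans ih

theorem sq_norm_gradient_add_sq_norm_le_descentEnergy (hf : IsConvexSmooth f L) (z : E) (k : ℕ)
    (x : E) :
    k ^ 2 * ‖∇ f x‖ ^ 2 + ‖L • (x - z) + (k : ℝ) • ∇ f z‖ ^ 2 ≤
      descentEnergy f L z k x + k ^ 2 * ‖∇ f z‖ ^ 2 := by
  have hL := hf.pos
  have htangent : 2 * L * k * ⟪∇ f z, x - z⟫ ≤ 2 * L * k * (f x - f z) := by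
    gcongr
    linarith [hf.add_inner_sub_le z x]
  rw [descentEnergy, norm_add_sq_real, real_inner_smul_left, real_inner_smul_right,
    real_inner_comm, norm_smul, norm_smul, Real.norm_of_nonneg hL.le, Real.norm_natCast]
  linarith

theorem sq_norm_gradient_iterate_add_sq_norm_le (hf : IsConvexSmooth f L) (x z : E) {k : ℕ}
    (hk : k ≠ 0) :
    ‖∇ f ((gradientStep f L)^[k] x)‖ ^ 2 +
        ‖L • (k : ℝ)⁻¹ • ((gradientStep f L)^[k] x - z) + ∇ f z‖ ^ 2 ≤
      ‖∇ f z‖ ^ 2 + ((k : ℝ)⁻¹ * (L * ‖x - z‖)) ^ 2 := by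
  set y := (gradientStep f L)^[k] x
  have hk' : (0 : ℝ) < k := by positivity
  have h : k ^ 2 * ‖∇ f y‖ ^ 2 + ‖L • (y - z) + (k : ℝ) • ∇ f z‖ ^ 2 ≤
      L ^ 2 * ‖x - z‖ ^ 2 + k ^ 2 * ‖∇ f z‖ ^ 2 :=
    (hf.sq_norm_gradient_add_sq_norm_le_descentEnergy z k y).trans
      (by gcongr; exact hf.descentEnergy_iterate_le x z k)
  have hscale : L • (y - z) + (k : ℝ) • ∇ f z = (k : ℝ) • (L • (k : ℝ)⁻¹ • (y - z) + ∇ f z) := by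
    rw [smul_add, smul_comm L, smul_inv_smul₀ hk'.ne']
  rw [hscale, norm_smul, Real.norm_natCast] at h
  refine le_of_mul_le_mul_left ?_ (pow_pos hk' 2)
  calc (k : ℝ) ^ 2 * (‖∇ f y‖ ^ 2 + ‖L • (k : ℝ)⁻¹ • (y - z) + ∇ f z‖ ^ 2)
      = k ^ 2 * ‖∇ f y‖ ^ 2 + (k * ‖L • (k : ℝ)⁻¹ • (y - z) + ∇ f z‖) ^ 2 := by ring
    _ ≤ L ^ 2 * ‖x - z‖ ^ 2 + k ^ 2 * ‖∇ f z‖ ^ 2 := h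
    _ = k ^ 2 * (‖∇ f z‖ ^ 2 + ((k : ℝ)⁻¹ * (L * ‖x - z‖)) ^ 2) := by field_simp; ring

variable {p : E}

theorem tendsto_sq_norm_gradient_iterate (hf : IsConvexSmooth f L)
    (hmem : p ∈ closure (Set.range (∇ f))) (hmin : ∀ y, ‖p‖ ≤ ‖∇ f y‖) (x : E) :
    Tendsto (fun k : ℕ => ‖∇ f ((gradientStep f L)^[k] x)‖ ^ 2) atTop (𝓝 (‖p‖ ^ 2)) := by
  refine tendsto_order.2 ⟨fun a ha => .of_forall fun k => ha.trans_le ?_, fun b hb => ?_⟩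
  · gcongr
    exact hmin _
  obtain ⟨_, hz, z, rfl⟩ : ∃ q, ‖q‖ ^ 2 < b ∧ q ∈ Set.range (∇ f) :=
    mem_closure_iff.1 hmem {q | ‖q‖ ^ 2 < b} (isOpen_lt (by fun_prop) continuous_const) hb
  have hbound : Tendsto (fun k : ℕ => ‖∇ f z‖ ^ 2 + ((k : ℝ)⁻¹ * (L * ‖x - z‖)) ^ 2) atTop
      (𝓝 (‖∇ f z‖ ^ 2)) := by
    simpa using ((tendsto_inv_atTop_nhds_zero_nat.mul_const (L * ‖x - z‖)).pow 2).const_add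
      (‖∇ f z‖ ^ 2)
  filter_upwards [hbound.eventually_lt_const hz, eventually_ne_atTop 0] with k hk hk0
  linarith [hf.sq_norm_gradient_iterate_add_sq_norm_le x z hk0,
    sq_nonneg ‖L • (k : ℝ)⁻¹ • ((gradientStep f L)^[k] x - z) + ∇ f z‖]

theorem norm_smul_iterate_add_le (hf : IsConvexSmooth f L) (hmin : ∀ y, ‖p‖ ≤ ‖∇ f y‖)
    (x z : E) {k : ℕ} (hk : k ≠ 0) :
    ‖L • (k : ℝ)⁻¹ • (gradientStep f L)^[k] x + p‖ ≤
      √(‖∇ f z‖ ^ 2 - ‖p‖ ^ 2 + ((k : ℝ)⁻¹ * (L * ‖x - z‖)) ^ 2) +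
        ‖(k : ℝ)⁻¹ • L • z‖ + ‖p - ∇ f z‖ := by
  set y := (gradientStep f L)^[k] x
  have hsplit : L • (k : ℝ)⁻¹ • y + p =
      (L • (k : ℝ)⁻¹ • (y - z) + ∇ f z) + (k : ℝ)⁻¹ • L • z + (p - ∇ f z) := by
    rw [smul_sub, smul_sub, smul_comm L _ z]
    abel
  have hmain : ‖L • (k : ℝ)⁻¹ • (y - z) + ∇ f z‖ ≤
      √(‖∇ f z‖ ^ 2 - ‖p‖ ^ 2 + ((k : ℝ)⁻¹ * (L * ‖x - z‖)) ^ 2) := by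
    have hp : ‖p‖ ^ 2 ≤ ‖∇ f y‖ ^ 2 := by
      gcongr
      exact hmin y
    apply Real.le_sqrt_of_sq_le
    linarith [hf.sq_norm_gradient_iterate_add_sq_norm_le x z hk]
  rw [hsplit]
  exact norm_add₃_le.trans (by gcongr)

theorem tendsto_smul_iterate (hf : IsConvexSmooth f L)
    (hmem : p ∈ closure (Set.range (∇ f))) (hmin : ∀ y, ‖p‖ ≤ ‖∇ f y‖) (x : E) :
    Tendsto (fun k : ℕ => L • (k : ℝ)⁻¹ • (gradientStep f L)^[k] x) atTop (𝓝 (-p)) := by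
  simp only [Metric.tendsto_nhds, dist_eq_norm, sub_neg_eq_add]
  intro ε hε
  obtain ⟨_, hz, z, rfl⟩ : ∃ q, √(‖q‖ ^ 2 - ‖p‖ ^ 2) + ‖p - q‖ < ε ∧ q ∈ Set.range (∇ f) :=
    mem_closure_iff.1 hmem {q | √(‖q‖ ^ 2 - ‖p‖ ^ 2) + ‖p - q‖ < ε}
      (isOpen_lt (by fun_prop) continuous_const) (by simpa using hε)
  have hbound : Tendsto (fun k : ℕ =>
      √(‖∇ f z‖ ^ 2 - ‖p‖ ^ 2 + ((k : ℝ)⁻¹ * (L * ‖x - z‖)) ^ 2) +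
        ‖(k : ℝ)⁻¹ • L • z‖ + ‖p - ∇ f z‖) atTop
      (𝓝 (√(‖∇ f z‖ ^ 2 - ‖p‖ ^ 2) + ‖p - ∇ f z‖)) := by
    have hinv : Tendsto (fun k : ℕ => (k : ℝ)⁻¹) atTop (𝓝 0) := tendsto_inv_atTop_nhds_zero_nat
    simpa using (((((hinv.mul_const (L * ‖x - z‖)).pow 2).const_add
      (‖∇ f z‖ ^ 2 - ‖p‖ ^ 2)).sqrt.add (hinv.smul_const (L • z)).norm).add_const ‖p - ∇ f z‖)
  filter_upwards [hbound.eventually_lt_const hz, eventually_ne_atTop 0] with k hk hk0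
  exact (hf.norm_smul_iterate_add_le hmin x z hk0).trans_lt hk

theorem sq_norm_add_sq_norm_gradient_sub_le (hf : IsConvexSmooth f L)
    (hmem : p ∈ closure (Set.range (∇ f))) (hmin : ∀ y, ‖p‖ ≤ ‖∇ f y‖) (z : E) :
    ‖p‖ ^ 2 + ‖∇ f z - p‖ ^ 2 ≤ ‖∇ f z‖ ^ 2 := by
  have hinv : Tendsto (fun k : ℕ => (k : ℝ)⁻¹ • L • z) atTop (𝓝 0) := by
    simpa using (tendsto_inv_atTop_nhds_zero_nat (𝕜 := ℝ)).smul_const (L • z)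
  have hdisplacement : Tendsto
      (fun k : ℕ => L • (k : ℝ)⁻¹ • ((gradientStep f L)^[k] z - z) + ∇ f z) atTop
      (𝓝 (∇ f z - p)) := by
    have h := ((hf.tendsto_smul_iterate hmem hmin z).sub hinv).add_const (∇ f z)
    rw [sub_zero, neg_add_eq_sub] at h
    simpa only [smul_sub, smul_comm L _ z] using h
  refine le_of_tendsto ((hf.tendsto_sq_norm_gradient_iterate hmem hmin z).add
    (hdisplacement.norm.pow 2)) ?_
  filter_upwards [eventually_ne_atTop 0] with k hk
  simpa using hf.sq_norm_gradient_iterate_add_sq_norm_le z z hk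

theorem tendsto_gradient_iterate (hf : IsConvexSmooth f L)
    (hmem : p ∈ closure (Set.range (∇ f))) (hmin : ∀ y, ‖p‖ ≤ ‖∇ f y‖) (x : E) :
    Tendsto (fun k : ℕ => ∇ f ((gradientStep f L)^[k] x)) atTop (𝓝 p) := by
  have hsq : Tendsto (fun k : ℕ => ‖∇ f ((gradientStep f L)^[k] x) - p‖ ^ 2) atTop (𝓝 0) :=
    squeeze_zero (fun _ => sq_nonneg _)
      (fun k => le_sub_iff_add_le'.2 (hf.sq_norm_add_sq_norm_gradient_sub_le hmem hmin _))
      (tendsto_sub_nhds_zero_iff.2 (hf.tendsto_sq_norm_gradient_iterate hmem hmin x))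
  exact tendsto_iff_norm_sub_tendsto_zero.2 (by simpa using hsq.sqrt)

end IsConvexSmooth

theorem gradient_descent_minimum_norm_point_general (hf : IsConvexSmooth f L) {x : ℕ → E}
    (hrec : ∀ i, x (i + 1) = gradientStep f L (x i)) {p : E}
    (hmem : p ∈ closure (Set.range (∇ f))) (hmin : ∀ q ∈ closure (Set.range (∇ f)), ‖p‖ ≤ ‖q‖) :
    Tendsto (fun i => ∇ f (x i)) atTop (𝓝 p) ∧
    Tendsto (fun i : ℕ => (i : ℝ)⁻¹ • x i) atTop (𝓝 (-((1 / L) • p))) := by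
  obtain ⟨x₀, rfl⟩ : ∃ x₀, x = fun i => (gradientStep f L)^[i] x₀ := by
    refine ⟨x 0, funext fun i => ?_⟩
    induction i with
    | zero => rfl
    | succ i ih => rw [hrec, ih, Function.iterate_succ_apply']
  have hmin_range (y : E) : ‖p‖ ≤ ‖∇ f y‖ := hmin _ (subset_closure (Set.mem_range_self y))
  refine ⟨hf.tendsto_gradient_iterate hmem hmin_range x₀, ?_⟩
  simpa [hf.pos.ne'] using (hf.tendsto_smul_iterate hmem hmin_range x₀).const_smul (1 / L)

end

/-- Gradient descent as a minimum-norm point algorithm (Theorem 3.12(2)): if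
`κ* := inf_y ‖∇f(y)‖ > 0`, `(x_i)` is the gradient-descent sequence with step size
`1/L`, and `p*` is the (unique) minimum-norm point of the closure of the gradient
image `{∇f(y) : y ∈ ℝⁿ}`, then `∇f(x_i) → p*` and `x_i/i → -p*/L`. -/
theorem gradient_descent_minimum_norm_point {n : ℕ} (hn : 1 ≤ n)
    (f : EuclideanSpace ℝ (Fin n) → ℝ) (L : ℝ) (hL : 0 < L)
    (hconv : ConvexOn ℝ Set.univ f) (hdiff : Differentiable ℝ f)
    (hsmooth : ∀ y z : EuclideanSpace ℝ (Fin n),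
      ‖gradient f y - gradient f z‖ ≤ L * ‖y - z‖)
    (hκ : 0 < ⨅ y, ‖gradient f y‖)
    (x : ℕ → EuclideanSpace ℝ (Fin n))
    (hrec : ∀ i : ℕ, x (i + 1) = x i - (1 / L) • gradient f (x i))
    (p : EuclideanSpace ℝ (Fin n))
    (hmem : p ∈ closure (Set.range (gradient f)))
    (hmin : ∀ q ∈ closure (Set.range (gradient f)), ‖p‖ ≤ ‖q‖) :
    Tendsto (fun i => gradient f (x i)) atTop (nhds p) ∧
    Tendsto (fun i : ℕ => ((i : ℝ))⁻¹ • x i) atTop (nhds (-((1 / L) • p))) := by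
  exact gradient_descent_minimum_norm_point_general ⟨hL, hconv, hdiff, hsmooth⟩ hrec hmem hmin
end

section
/- Duality theorem for the scalability limit of operator scaling (Theorem 4.11): the infimum over all g ∈ GL_n(ℂ) and h ∈ GL_m(ℂ) with Σ_{ℓ=1}^N ‖g A_ℓ h†‖² = 1 of the quantity ( ‖Σ_{ℓ=1}^N g A_ℓ h† h A_ℓ† g† − (1/n)·Iₙ‖² + ‖Σ_{ℓ=1}^N h A_ℓ† g† g A_ℓ h† − (1/m)·Iₘ‖² )^{1/2} is equal to the supremum over all special unitary matrices σ ∈ SU(n), τ ∈ SU(m) and all vectors p ∈ ℝⁿ, q ∈ ℝᵐ with Σᵢ pᵢ = Σⱼ qⱼ = 0 and ‖p‖² + ‖q‖² ≤ 1 of the quantity −max{ pᵢ + qⱼ : indices (i,j) such that (σ A_ℓ τ†)_{ij} ≠ 0 for some ℓ }. -/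
open Filter Matrix

/-- The Frobenius norm of a complex matrix. -/
noncomputable def frobNorm {a b : ℕ} (M : Matrix (Fin a) (Fin b) ℂ) : ℝ :=
  Real.sqrt (∑ i, ∑ j, ‖M i j‖ ^ 2)

/-!
Weak duality: by the QR decomposition, `g` and `h` may be taken, up to unitary factors that change
neither the mass nor the defect, to be triangular with respect to the orderings of `p` and `q`. A
triangular scaling only populates positions of smaller weight, and Cauchy–Schwarz applied to the
diagonals of the two marginals gives the inequality.

Strong duality: `F(P, Q) = log ∑ ‖exp (P/2) A_ℓ exp (Q/2)‖²`, on pairs of traceless Hermitian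
matrices, is convex along lines through the origin. At a minimiser of `F + (ε/2)‖·‖²` the
normalised marginals differ from the uniform ones by `-ε P` and `-ε Q`, so a lower bound `δ` on the
defect reads `δ ≤ ε ‖(P, Q)‖`. Letting `ε → 0`, the directions of the minimisers accumulate at a
unit pair along which `F` decreases at rate at least `δ`. Diagonalising this pair turns `F` into a
log-sum-exp of the weights `pᵢ + qⱼ` over the support, all of which must then be at most `-δ`.
-/

namespace OperatorScaling

open scoped Matrix.Norms.Frobenius
open RCLike Topology

section Frobenius

variable {𝕜 n m : Type*} [RCLike 𝕜] [Fintype m]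

theorem re_mul_conjTranspose_apply_self (M : Matrix n m 𝕜) (i : n) :
    re ((M * Mᴴ) i i) = ∑ j, ‖M i j‖ ^ 2 := by
  simp only [mul_apply, conjTranspose_apply, star_def, mul_conj, map_sum, ← ofReal_pow, ofReal_re]

variable [Fintype n]

theorem frobenius_norm_sq_eq_sum (M : Matrix n m 𝕜) : ‖M‖ ^ 2 = ∑ i, ∑ j, ‖M i j‖ ^ 2 := by
  rw [frobenius_norm_def, ← Real.sqrt_eq_rpow, Real.sq_sqrt (by positivity)]
  simp only [Real.rpow_two]

theorem frobenius_norm_sq_eq_re_trace (M : Matrix n m 𝕜) : ‖M‖ ^ 2 = re (trace (M * Mᴴ)) := by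
  simp only [trace, diag_apply, map_sum, re_mul_conjTranspose_apply_self,
    frobenius_norm_sq_eq_sum]

theorem re_trace_conjTranspose (M : Matrix n n 𝕜) : re (trace Mᴴ) = re (trace M) := by
  rw [trace_conjTranspose, star_def, conj_re]

theorem re_trace_smul (c : ℝ) (M : Matrix n n 𝕜) : re (trace (c • M)) = c * re (trace M) := by
  rw [trace_smul, smul_re]

theorem conjTranspose_mem_unitaryGroup [DecidableEq n] {U : Matrix n n 𝕜}
    (hU : U ∈ unitaryGroup n 𝕜) : Uᴴ ∈ unitaryGroup n 𝕜 :=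
  Unitary.star_mem hU

theorem frobenius_norm_unitary_mul [DecidableEq n] {U : Matrix n n 𝕜}
    (hU : U ∈ unitaryGroup n 𝕜) (M : Matrix n m 𝕜) : ‖U * M‖ = ‖M‖ := by
  have hU' : Uᴴ * U = 1 := mem_unitaryGroup_iff'.mp hU
  rw [← sq_eq_sq₀ (norm_nonneg _) (norm_nonneg _), frobenius_norm_sq_eq_re_trace,
    frobenius_norm_sq_eq_re_trace, conjTranspose_mul, trace_mul_comm, Matrix.mul_assoc,
    ← Matrix.mul_assoc Uᴴ, hU', Matrix.one_mul, trace_mul_comm]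

theorem frobenius_norm_mul_conjTranspose_unitary [DecidableEq m] {U : Matrix m m 𝕜}
    (hU : U ∈ unitaryGroup m 𝕜) (M : Matrix n m 𝕜) : ‖M * Uᴴ‖ = ‖M‖ := by
  rw [← frobenius_norm_conjTranspose, conjTranspose_mul, conjTranspose_conjTranspose,
    frobenius_norm_unitary_mul hU, frobenius_norm_conjTranspose]

theorem frobenius_norm_unitary_conj_sub_smul_one [DecidableEq n] {U : Matrix n n 𝕜}
    (hU : U ∈ unitaryGroup n 𝕜) (M : Matrix n n 𝕜) (c : 𝕜) :
    ‖U * M * Uᴴ - c • (1 : Matrix n n 𝕜)‖ = ‖M - c • (1 : Matrix n n 𝕜)‖ := by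
  have conj_smul_one : U * (c • (1 : Matrix n n 𝕜)) * Uᴴ = c • 1 := by
    rw [Matrix.mul_smul, Matrix.smul_mul, Matrix.mul_one]
    exact congrArg (c • ·) (mem_unitaryGroup_iff.mp hU)
  rw [← frobenius_norm_unitary_mul hU (M - c • 1),
    ← frobenius_norm_mul_conjTranspose_unitary hU (U * (M - c • 1)), Matrix.mul_sub,
    Matrix.sub_mul, conj_smul_one]

theorem sum_re_diag_sq_le_frobenius_norm_sq (M : Matrix n n 𝕜) :
    ∑ i, re (M i i) ^ 2 ≤ ‖M‖ ^ 2 := by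
  rw [frobenius_norm_sq_eq_sum]
  refine Finset.sum_le_sum fun i _ => ?_
  calc re (M i i) ^ 2 ≤ ‖M i i‖ ^ 2 := sq_le_sq.mpr ((abs_re_le_norm _).trans (le_abs_self _))
    _ ≤ ∑ j, ‖M i j‖ ^ 2 :=
      Finset.single_le_sum (f := fun j => ‖M i j‖ ^ 2) (fun j _ => sq_nonneg _) (Finset.mem_univ i)

end Frobenius

section Tuple

variable {𝕜 ι n m : Type*} [RCLike 𝕜]

/-- The tuple of conjugate transposes. Passing to it exchanges the two sides of the scaling
problem, so that right-hand statements are left-hand statements about `adj A`. -/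
def adj (A : ι → Matrix n m 𝕜) : ι → Matrix m n 𝕜 :=
  fun ℓ => (A ℓ)ᴴ

theorem adj_ne_zero {A : ι → Matrix n m 𝕜} (hA : A ≠ 0) : adj A ≠ 0 := fun h =>
  hA (funext fun ℓ => conjTranspose_eq_zero.mp (congrFun h ℓ))

theorem adj_smul (c : ℝ) (A : ι → Matrix n m 𝕜) : adj (c • A) = c • adj A := by
  funext ℓ
  rw [adj, Pi.smul_apply, conjTranspose_smul, star_trivial, Pi.smul_apply, adj]

/-- The action of a pair of matrices on a tuple, `A_ℓ ↦ g A_ℓ hᴴ`. -/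
def scale [Fintype n] [Fintype m] (g : Matrix n n 𝕜) (h : Matrix m m 𝕜) (A : ι → Matrix n m 𝕜) :
    ι → Matrix n m 𝕜 :=
  fun ℓ => g * A ℓ * hᴴ

/-- The total squared Frobenius norm of a tuple. -/
noncomputable def mass [Fintype ι] [Fintype n] [Fintype m] (A : ι → Matrix n m 𝕜) : ℝ :=
  ∑ ℓ, ‖A ℓ‖ ^ 2

/-- The left marginal `∑_ℓ A_ℓ A_ℓᴴ`; the right marginal is `leftMarginal (adj A)`. -/
def leftMarginal [Fintype ι] [Fintype m] (A : ι → Matrix n m 𝕜) : Matrix n n 𝕜 :=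
  ∑ ℓ, A ℓ * (A ℓ)ᴴ

/-- The distance of the two marginals from the uniform ones, which a scaling tries to minimise. -/
noncomputable def marginalDefect [Fintype ι] [Fintype n] [DecidableEq n] [Fintype m] [DecidableEq m]
    (A : ι → Matrix n m 𝕜) : ℝ :=
  √(‖leftMarginal A - (Fintype.card n : 𝕜)⁻¹ • (1 : Matrix n n 𝕜)‖ ^ 2 +
    ‖leftMarginal (adj A) - (Fintype.card m : 𝕜)⁻¹ • (1 : Matrix m m 𝕜)‖ ^ 2)

section Action

variable [Fintype n] [Fintype m]

theorem scale_scale (g g' : Matrix n n 𝕜) (h h' : Matrix m m 𝕜) (A : ι → Matrix n m 𝕜) :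
    scale g h (scale g' h' A) = scale (g * g') (h * h') A := by
  funext ℓ
  simp only [scale, conjTranspose_mul, Matrix.mul_assoc]

@[simp]
theorem scale_one_one [DecidableEq n] [DecidableEq m] (A : ι → Matrix n m 𝕜) :
    scale 1 1 A = A := by
  funext ℓ
  simp only [scale, conjTranspose_one, Matrix.one_mul, Matrix.mul_one]

theorem adj_scale (g : Matrix n n 𝕜) (h : Matrix m m 𝕜) (A : ι → Matrix n m 𝕜) :
    adj (scale g h A) = scale h g (adj A) := by
  funext ℓ
  simp only [adj, scale, conjTranspose_mul, conjTranspose_conjTranspose, Matrix.mul_assoc]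

theorem scale_smul_left (c : ℝ) (g : Matrix n n 𝕜) (h : Matrix m m 𝕜) (A : ι → Matrix n m 𝕜) :
    scale (c • g) h A = c • scale g h A := by
  funext ℓ
  simp only [scale, Matrix.smul_mul, Pi.smul_apply]

theorem exists_scale_eq_smul_scale [DecidableEq n] [DecidableEq m] {g : Matrix n n 𝕜}
    {h : Matrix m m 𝕜} (hg : IsUnit g) (hh : IsUnit h) {c : ℝ} (hc : c ≠ 0)
    (A : ι → Matrix n m 𝕜) :
    ∃ (g' : GL n 𝕜) (h' : GL m 𝕜), scale g'.1 h'.1 A = c • scale g h A :=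
  ⟨(hg.smul (Units.mk0 c hc)).unit, hh.unit, scale_smul_left c g h A⟩

theorem scale_ne_zero [DecidableEq n] [DecidableEq m] {g : Matrix n n 𝕜} {h : Matrix m m 𝕜}
    (hg : IsUnit g) (hh : IsUnit h) {A : ι → Matrix n m 𝕜} (hA : A ≠ 0) : scale g h A ≠ 0 := by
  obtain ⟨g, rfl⟩ := hg
  obtain ⟨h, rfl⟩ := hh
  intro hzero
  apply hA
  rw [← scale_one_one A, ← g.inv_mul, ← h.inv_mul, ← scale_scale, hzero]
  funext ℓ
  simp only [scale, Pi.zero_apply, Matrix.mul_zero, Matrix.zero_mul]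

end Action

variable [Fintype ι]

theorem leftMarginal_isHermitian [Fintype m] (A : ι → Matrix n m 𝕜) :
    (leftMarginal A).IsHermitian :=
  isSelfAdjoint_sum _ fun ℓ _ => isHermitian_mul_conjTranspose_self (A ℓ)

theorem leftMarginal_smul [Fintype m] (c : ℝ) (A : ι → Matrix n m 𝕜) :
    leftMarginal (c • A) = c ^ 2 • leftMarginal A := by
  simp only [leftMarginal, Pi.smul_apply, conjTranspose_smul, star_trivial, Matrix.smul_mul,
    Matrix.mul_smul, smul_smul, ← Finset.smul_sum, sq]

theorem leftMarginal_scale [Fintype n] [Fintype m] [DecidableEq n] (g : Matrix n n 𝕜)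
    (h : Matrix m m 𝕜) (A : ι → Matrix n m 𝕜) :
    leftMarginal (scale g h A) = g * leftMarginal (scale 1 h A) * gᴴ := by
  simp only [leftMarginal, scale, Matrix.mul_sum, Matrix.sum_mul, conjTranspose_mul,
    Matrix.one_mul, Matrix.mul_assoc]

theorem leftMarginal_scale_unitary [Fintype n] [Fintype m] [DecidableEq m] (g : Matrix n n 𝕜)
    {V : Matrix m m 𝕜} (hV : V ∈ unitaryGroup m 𝕜) (A : ι → Matrix n m 𝕜) :
    leftMarginal (scale g V A) = g * leftMarginal A * gᴴ := by
  have hV' (M : Matrix m n 𝕜) : Vᴴ * (V * M) = M := by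
    rw [← Matrix.mul_assoc, ← star_eq_conjTranspose, mem_unitaryGroup_iff'.mp hV, Matrix.one_mul]
  simp only [leftMarginal, scale, Matrix.mul_sum, Matrix.sum_mul, conjTranspose_mul,
    conjTranspose_conjTranspose, Matrix.mul_assoc, hV']

section Mass

variable [Fintype n] [Fintype m]

theorem mass_eq_sum (A : ι → Matrix n m 𝕜) : mass A = ∑ ℓ, ∑ i, ∑ j, ‖A ℓ i j‖ ^ 2 := by
  simp only [mass, frobenius_norm_sq_eq_sum]

theorem mass_eq_re_trace (A : ι → Matrix n m 𝕜) : mass A = re (trace (leftMarginal A)) := by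
  simp only [mass, leftMarginal, frobenius_norm_sq_eq_re_trace, trace_sum, map_sum]

theorem mass_adj (A : ι → Matrix n m 𝕜) : mass (adj A) = mass A := by
  simp only [mass, adj, frobenius_norm_conjTranspose]

theorem mass_smul (c : ℝ) (A : ι → Matrix n m 𝕜) : mass (c • A) = c ^ 2 * mass A := by
  simp only [mass, Pi.smul_apply, norm_smul, mul_pow, Real.norm_eq_abs, sq_abs, Finset.mul_sum]

theorem mass_pos {A : ι → Matrix n m 𝕜} (hA : A ≠ 0) : 0 < mass A := by
  obtain ⟨ℓ, hℓ⟩ := Function.ne_iff.mp hA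
  exact Finset.sum_pos' (fun _ _ => sq_nonneg _)
    ⟨ℓ, Finset.mem_univ ℓ, pow_pos (norm_pos_iff.mpr hℓ) 2⟩

theorem mass_scale_unitary [DecidableEq n] [DecidableEq m] {U : Matrix n n 𝕜} {V : Matrix m m 𝕜}
    (hU : U ∈ unitaryGroup n 𝕜) (hV : V ∈ unitaryGroup m 𝕜) (A : ι → Matrix n m 𝕜) :
    mass (scale U V A) = mass A := by
  simp only [mass, scale, frobenius_norm_mul_conjTranspose_unitary hV,
    frobenius_norm_unitary_mul hU]

theorem marginalDefect_scale_unitary [DecidableEq n] [DecidableEq m] {U : Matrix n n 𝕜}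
    {V : Matrix m m 𝕜} (hU : U ∈ unitaryGroup n 𝕜) (hV : V ∈ unitaryGroup m 𝕜)
    (A : ι → Matrix n m 𝕜) : marginalDefect (scale U V A) = marginalDefect A := by
  rw [marginalDefect, adj_scale, leftMarginal_scale_unitary U hV, leftMarginal_scale_unitary V hU,
    frobenius_norm_unitary_conj_sub_smul_one hU,
    frobenius_norm_unitary_conj_sub_smul_one hV, marginalDefect]

end Mass

end Tuple

section WeakDuality

variable {𝕜 ι n m : Type*} [RCLike 𝕜]

/-- The largest `p i + q j` over the positions `(i, j)` at which some matrix of the tuple has a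
nonzero entry (and `0` for the zero tuple). -/
noncomputable def maxWeight (B : ι → Matrix n m 𝕜) (p : n → ℝ) (q : m → ℝ) : ℝ :=
  sSup {c : ℝ | ∃ i j, (∃ ℓ, B ℓ i j ≠ 0) ∧ c = p i + q j}

theorem weight_le_maxWeight [Finite n] [Finite m] {B : ι → Matrix n m 𝕜} {ℓ : ι} {i : n} {j : m}
    (hB : B ℓ i j ≠ 0) (p : n → ℝ) (q : m → ℝ) : p i + q j ≤ maxWeight B p q := by
  refine le_csSup ?_ ⟨i, j, ⟨ℓ, hB⟩, rfl⟩
  refine ((Set.finite_range fun x : n × m => p x.1 + q x.2).subset ?_).bddAbove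
  rintro _ ⟨i, j, -, rfl⟩
  exact ⟨(i, j), rfl⟩

theorem maxWeight_le {B : ι → Matrix n m 𝕜} (hB : B ≠ 0) {p : n → ℝ} {q : m → ℝ} {c : ℝ}
    (hc : ∀ ℓ i j, B ℓ i j ≠ 0 → p i + q j ≤ c) : maxWeight B p q ≤ c := by
  obtain ⟨ℓ, hℓ⟩ := Function.ne_iff.mp hB
  obtain ⟨i, j, hij⟩ : ∃ i j, B ℓ i j ≠ 0 := by
    by_contra! h
    exact hℓ (Matrix.ext h)
  refine csSup_le ⟨_, i, j, ⟨ℓ, hij⟩, rfl⟩ ?_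
  rintro _ ⟨i, j, ⟨ℓ, hij⟩, rfl⟩
  exact hc ℓ i j hij

variable [Fintype m]

theorem re_leftMarginal_apply_self [Fintype ι] (B : ι → Matrix n m 𝕜) (i : n) :
    re (leftMarginal B i i) = ∑ ℓ, ∑ j, ‖B ℓ i j‖ ^ 2 := by
  simp only [leftMarginal, Matrix.sum_apply, map_sum, re_mul_conjTranspose_apply_self]

variable [Fintype n]

theorem sum_mul_re_leftMarginal [Fintype ι] (B : ι → Matrix n m 𝕜) (p : n → ℝ) :
    ∑ i, p i * re (leftMarginal B i i) = ∑ ℓ, ∑ i, ∑ j, p i * ‖B ℓ i j‖ ^ 2 := by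
  simp only [re_leftMarginal_apply_self, Finset.mul_sum]
  exact Finset.sum_comm

theorem sum_mul_re_rightMarginal [Fintype ι] (B : ι → Matrix n m 𝕜) (q : m → ℝ) :
    ∑ j, q j * re (leftMarginal (adj B) j j) = ∑ ℓ, ∑ i, ∑ j, q j * ‖B ℓ i j‖ ^ 2 := by
  rw [sum_mul_re_leftMarginal]
  refine Finset.sum_congr rfl fun ℓ _ => ?_
  rw [Finset.sum_comm]
  simp only [adj, conjTranspose_apply, norm_star]

theorem sum_mul_re_sub_smul_one [DecidableEq n] (M : Matrix n n 𝕜) (c : 𝕜) {p : n → ℝ}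
    (hp : ∑ i, p i = 0) :
    ∑ i, p i * re ((M - c • (1 : Matrix n n 𝕜)) i i) = ∑ i, p i * re (M i i) := by
  simp only [Matrix.sub_apply, Matrix.smul_apply, one_apply_eq, map_sub, mul_sub,
    Finset.sum_sub_distrib, ← Finset.sum_mul, hp, zero_mul, sub_zero]

theorem neg_sum_diag_le_sqrt_norm_sq_add (X : Matrix n n 𝕜) (Y : Matrix m m 𝕜) {p : n → ℝ}
    {q : m → ℝ} (hpq : ∑ i, p i ^ 2 + ∑ j, q j ^ 2 ≤ 1) :
    -(∑ i, p i * re (X i i) + ∑ j, q j * re (Y j j)) ≤ √(‖X‖ ^ 2 + ‖Y‖ ^ 2) := by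
  have cauchy_schwarz := Finset.sum_mul_sq_le_sq_mul_sq Finset.univ
    (Sum.elim p q) (Sum.elim (fun i => re (X i i)) (fun j => re (Y j j)))
  simp only [Fintype.sum_sum_type, Sum.elim_inl, Sum.elim_inr] at cauchy_schwarz
  refine Real.le_sqrt_of_sq_le ?_
  calc (-(∑ i, p i * re (X i i) + ∑ j, q j * re (Y j j))) ^ 2
      ≤ (∑ i, p i ^ 2 + ∑ j, q j ^ 2) * (∑ i, re (X i i) ^ 2 + ∑ j, re (Y j j) ^ 2) := by
        rwa [neg_sq]
    _ ≤ 1 * (∑ i, re (X i i) ^ 2 + ∑ j, re (Y j j) ^ 2) := by gcongr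
    _ ≤ ‖X‖ ^ 2 + ‖Y‖ ^ 2 := by
        rw [one_mul]
        exact add_le_add (sum_re_diag_sq_le_frobenius_norm_sq X)
          (sum_re_diag_sq_le_frobenius_norm_sq Y)

theorem neg_le_marginalDefect_of_forall_weight_le [Fintype ι] [DecidableEq n] [DecidableEq m]
    {B : ι → Matrix n m 𝕜} (hB : mass B = 1) {p : n → ℝ} {q : m → ℝ} (hp : ∑ i, p i = 0)
    (hq : ∑ j, q j = 0) (hpq : ∑ i, p i ^ 2 + ∑ j, q j ^ 2 ≤ 1) {c : ℝ}
    (hc : ∀ ℓ i j, B ℓ i j ≠ 0 → p i + q j ≤ c) : -c ≤ marginalDefect B := by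
  refine le_trans (neg_le_neg ?_) (neg_sum_diag_le_sqrt_norm_sq_add _ _ hpq)
  rw [sum_mul_re_sub_smul_one _ _ hp, sum_mul_re_sub_smul_one _ _ hq, sum_mul_re_leftMarginal,
    sum_mul_re_rightMarginal]
  calc ∑ ℓ, ∑ i, ∑ j, p i * ‖B ℓ i j‖ ^ 2 + ∑ ℓ, ∑ i, ∑ j, q j * ‖B ℓ i j‖ ^ 2
      = ∑ ℓ, ∑ i, ∑ j, (p i + q j) * ‖B ℓ i j‖ ^ 2 := by
        simp only [add_mul, Finset.sum_add_distrib]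
    _ ≤ ∑ ℓ, ∑ i, ∑ j, c * ‖B ℓ i j‖ ^ 2 := by
        refine Finset.sum_le_sum fun ℓ _ => Finset.sum_le_sum fun i _ =>
          Finset.sum_le_sum fun j _ => ?_
        rcases eq_or_ne (B ℓ i j) 0 with hzero | hne
        · simp [hzero]
        · exact mul_le_mul_of_nonneg_right (hc ℓ i j hne) (sq_nonneg _)
    _ = c * mass B := by simp only [mass_eq_sum, Finset.mul_sum]
    _ = c := by rw [hB, mul_one]

theorem exists_equiv_fin_monotone {α : Type*} [LinearOrder α] (p : n → α) :
    ∃ e : Fin (Fintype.card n) ≃ n, Monotone (p ∘ e) :=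
  ⟨(Tuple.sort (p ∘ (Fintype.equivFin n).symm)).trans (Fintype.equivFin n).symm,
    Tuple.monotone_sort (p ∘ (Fintype.equivFin n).symm)⟩

theorem exists_unitary_mul_blockTriangular [DecidableEq n] {α : Type*} [LinearOrder α]
    (M : Matrix n n 𝕜) (p : n → α) : ∃ U ∈ unitaryGroup n 𝕜, (U * M).BlockTriangular p := by
  obtain ⟨e, he⟩ := exists_equiv_fin_monotone p
  let column (i : Fin (Fintype.card n)) : EuclideanSpace 𝕜 n := WithLp.toLp 2 fun k => M k (e i)
  have hcard : Module.finrank 𝕜 (EuclideanSpace 𝕜 n) = Fintype.card (Fin (Fintype.card n)) := by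
    simp
  let b := InnerProductSpace.gramSchmidtOrthonormalBasis hcard column
  let U := (b.reindex e).toBasis.toMatrix (EuclideanSpace.basisFun n 𝕜)
  refine ⟨U, (b.reindex e).toMatrix_orthonormalBasis_mem_unitary _, fun i j hji => ?_⟩
  have hlt : e.symm j < e.symm i := he.reflect_lt (by simpa using hji)
  calc (U * M) i j = inner 𝕜 (b (e.symm i)) (column (e.symm j)) := by
        simp [U, column, mul_apply, Module.Basis.toMatrix_apply, OrthonormalBasis.repr_apply_apply,
          PiLp.inner_apply, mul_comm]
    _ = 0 := InnerProductSpace.gramSchmidtOrthonormalBasis_inv_triangular hcard column hlt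

theorem weight_le_of_scale_blockTriangular {R : Matrix n n 𝕜} {S : Matrix m m 𝕜} {p : n → ℝ}
    {q : m → ℝ} (hR : R.BlockTriangular p) (hS : S.BlockTriangular q) {B : ι → Matrix n m 𝕜}
    {c : ℝ} (hc : ∀ ℓ i j, B ℓ i j ≠ 0 → p i + q j ≤ c) (ℓ : ι) (i : n) (j : m)
    (hij : scale R S B ℓ i j ≠ 0) : p i + q j ≤ c := by
  obtain ⟨l, -, hl⟩ := Finset.exists_ne_zero_of_sum_ne_zero hij
  obtain ⟨k, -, hk⟩ := Finset.exists_ne_zero_of_sum_ne_zero (left_ne_zero_of_mul hl)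
  have hik : p i ≤ p k := not_lt.mp fun hlt => left_ne_zero_of_mul hk (hR hlt)
  have hjl : q j ≤ q l := not_lt.mp fun hlt => right_ne_zero_of_mul hl (by simp [hS hlt])
  linarith [hc ℓ k l (right_ne_zero_of_mul hk)]

theorem neg_maxWeight_le_marginalDefect [Fintype ι] [DecidableEq n] [DecidableEq m]
    {A : ι → Matrix n m 𝕜} {g : Matrix n n 𝕜} {h : Matrix m m 𝕜}
    (hmass : mass (scale g h A) = 1) {σ : Matrix n n 𝕜} {τ : Matrix m m 𝕜}
    (hσ : σ ∈ unitaryGroup n 𝕜) (hτ : τ ∈ unitaryGroup m 𝕜) {p : n → ℝ} {q : m → ℝ}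
    (hp : ∑ i, p i = 0) (hq : ∑ j, q j = 0) (hpq : ∑ i, p i ^ 2 + ∑ j, q j ^ 2 ≤ 1) :
    -maxWeight (scale σ τ A) p q ≤ marginalDefect (scale g h A) := by
  obtain ⟨U, hU, hUg⟩ := exists_unitary_mul_blockTriangular (g * star σ) p
  obtain ⟨V, hV, hVh⟩ := exists_unitary_mul_blockTriangular (h * star τ) q
  have hscale : scale (U * (g * star σ)) (V * (h * star τ)) (scale σ τ A) =
      scale U V (scale g h A) := by
    simp only [scale_scale, Matrix.mul_assoc, mem_unitaryGroup_iff'.mp hσ,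
      mem_unitaryGroup_iff'.mp hτ, Matrix.mul_one]
  rw [← marginalDefect_scale_unitary hU hV, ← hscale]
  refine neg_le_marginalDefect_of_forall_weight_le ?_ hp hq hpq
    (weight_le_of_scale_blockTriangular hUg hVh fun ℓ i j hij => weight_le_maxWeight hij p q)
  rw [hscale, mass_scale_unitary hU hV, hmass]

end WeakDuality

section Asymptotics

variable {V : Type*} [NormedAddCommGroup V] [NormedSpace ℝ V] {F : V → ℝ}

theorem exists_forall_sub_mul_norm_le [FiniteDimensional ℝ V] (hF : Continuous F)
    (hconv : ∀ x, ConvexOn ℝ Set.univ fun s : ℝ => F (s • x)) :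
    ∃ C, ∀ x, F 0 - C * ‖x‖ ≤ F x := by
  have := FiniteDimensional.proper_real V
  obtain ⟨b, hb⟩ := ((isCompact_sphere (0 : V) 1).image hF).bddAbove
  refine ⟨b - F 0, fun x => ?_⟩
  rcases eq_or_ne x 0 with rfl | hx
  · simp
  set u : V := ‖x‖⁻¹ • x
  have hr : 0 < ‖x‖ := norm_pos_iff.mpr hx
  have hux : ‖x‖ • u = x := smul_inv_smul₀ hr.ne' x
  have hneg : F ((-1 : ℝ) • u) ≤ b := by
    refine hb ⟨_, ?_, rfl⟩
    simp [u, norm_smul, hr.ne']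
  have hzero : ‖x‖ / (1 + ‖x‖) * -1 + 1 / (1 + ‖x‖) * ‖x‖ = 0 := by ring
  have hsum : ‖x‖ / (1 + ‖x‖) + 1 / (1 + ‖x‖) = 1 := by
    rw [← add_div, add_comm, div_self (by positivity)]
  have hchord : F 0 ≤ ‖x‖ / (1 + ‖x‖) * F ((-1 : ℝ) • u) + 1 / (1 + ‖x‖) * F x := by
    have := (hconv u).2 (Set.mem_univ (-1)) (Set.mem_univ ‖x‖) (by positivity) (by positivity) hsum
    simpa only [smul_eq_mul, hzero, zero_smul, hux] using this
  have hchord' : (1 + ‖x‖) * F 0 ≤ ‖x‖ * F ((-1 : ℝ) • u) + F x := by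
    calc (1 + ‖x‖) * F 0
        ≤ (1 + ‖x‖) * (‖x‖ / (1 + ‖x‖) * F ((-1 : ℝ) • u) + 1 / (1 + ‖x‖) * F x) := by gcongr
      _ = ‖x‖ * F ((-1 : ℝ) • u) + F x := by field_simp
  nlinarith

theorem exists_forall_add_norm_sq_le [FiniteDimensional ℝ V] (hF : Continuous F)
    (hconv : ∀ x, ConvexOn ℝ Set.univ fun s : ℝ => F (s • x)) {ε : ℝ} (hε : 0 < ε) :
    ∃ x, ∀ y, F x + ε / 2 * ‖x‖ ^ 2 ≤ F y + ε / 2 * ‖y‖ ^ 2 := by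
  have := FiniteDimensional.proper_real V
  obtain ⟨C, hC⟩ := exists_forall_sub_mul_norm_le hF hconv
  have hquadratic : Tendsto (fun r : ℝ => F 0 + r * (ε / 2 * r - C)) atTop atTop :=
    tendsto_atTop_add_const_left _ _ <| tendsto_id.atTop_mul_atTop₀ <|
      tendsto_atTop_add_const_right _ _ <| tendsto_id.const_mul_atTop (half_pos hε)
  refine Continuous.exists_forall_le (by fun_prop)
    (tendsto_atTop_mono (fun x => ?_) (hquadratic.comp tendsto_norm_cocompact_atTop))
  simp only [Function.comp_apply]
  linarith [hC x]

theorem le_sub_mul_norm_sq_of_forall_add_norm_sq_le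
    (hconv : ∀ x, ConvexOn ℝ Set.univ fun s : ℝ => F (s • x)) {ε : ℝ} {x : V}
    (hmin : ∀ y, F x + ε / 2 * ‖x‖ ^ 2 ≤ F y + ε / 2 * ‖y‖ ^ 2) {s : ℝ} (hs₀ : 0 ≤ s)
    (hs₁ : s ≤ 1) : F (s • x) ≤ F 0 - s * (ε * ‖x‖ ^ 2) := by
  have hchord {t : ℝ} (ht₀ : 0 ≤ t) (ht₁ : t ≤ 1) : F (t • x) ≤ (1 - t) * F 0 + t * F x := by
    simpa using (hconv x).2 (Set.mem_univ 0) (Set.mem_univ 1) (sub_nonneg.mpr ht₁) ht₀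
      (sub_add_cancel 1 t)
  have hslope : ∀ t ∈ Set.Ioc (0 : ℝ) 1, F x - F 0 + ε * ‖x‖ ^ 2 ≤ t * (ε / 2 * ‖x‖ ^ 2) := by
    rintro t ⟨ht₀, ht₁⟩
    have hmin' := hmin ((1 - t) • x)
    have hchord' := hchord (sub_nonneg.mpr ht₁) (sub_le_self 1 ht₀.le)
    rw [norm_smul, mul_pow, Real.norm_eq_abs, sq_abs] at hmin'
    refine le_of_mul_le_mul_left ?_ ht₀
    linarith
  have hlim : Tendsto (fun t : ℝ => t * (ε / 2 * ‖x‖ ^ 2)) (𝓝[>] 0) (𝓝 0) :=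
    tendsto_nhdsWithin_of_tendsto_nhds (Continuous.tendsto' (by fun_prop) _ _ (zero_mul _))
  have hdrop : F x - F 0 + ε * ‖x‖ ^ 2 ≤ 0 :=
    ge_of_tendsto hlim (eventually_of_mem (Ioc_mem_nhdsGT one_pos) hslope)
  nlinarith [hchord hs₀ hs₁]

/-- A regularised minimiser `x` makes `F` drop at rate `ε ‖x‖` along its own ray, and `‖x‖ → ∞` as
`ε → 0`; any limit of the normalised minimisers is the direction sought. -/
theorem exists_unit_forall_le_sub_mul [FiniteDimensional ℝ V] (hF : Continuous F)
    (hconv : ∀ x, ConvexOn ℝ Set.univ fun s : ℝ => F (s • x)) {δ : ℝ} (hδ : 0 < δ)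
    (hmin : ∀ ε > 0, ∀ x, (∀ y, F x + ε / 2 * ‖x‖ ^ 2 ≤ F y + ε / 2 * ‖y‖ ^ 2) → δ ≤ ε * ‖x‖) :
    ∃ u : V, ‖u‖ = 1 ∧ ∀ t, 0 ≤ t → F (t • u) ≤ F 0 - t * δ := by
  have := FiniteDimensional.proper_real V
  have hε (k : ℕ) : 0 < 1 / ((k : ℝ) + 1) := Nat.one_div_pos_of_nat
  choose x hx using fun k => exists_forall_add_norm_sq_le hF hconv (hε k)
  have hgrowth (k : ℕ) : δ * (k + 1) ≤ ‖x k‖ := by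
    have := hmin _ (hε k) (x k) (hx k)
    rwa [one_div_mul_eq_div, le_div_iff₀ (by positivity)] at this
  have hpos (k : ℕ) : 0 < ‖x k‖ := lt_of_lt_of_le (by positivity) (hgrowth k)
  have hnorm : Tendsto (fun k => ‖x k‖) atTop atTop :=
    tendsto_atTop_mono hgrowth <| (tendsto_atTop_add_const_right _ _
      tendsto_natCast_atTop_atTop).const_mul_atTop hδ
  obtain ⟨u, hu, φ, hφ, hlim⟩ := (isCompact_sphere (0 : V) 1).tendsto_subseq
    (x := fun k => ‖x k‖⁻¹ • x k) fun k => by simp [norm_smul, (hpos k).ne']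
  refine ⟨u, by simpa using hu, fun t ht => ?_⟩
  refine le_of_tendsto (hF.tendsto (t • u) |>.comp (hlim.const_smul t)) ?_
  filter_upwards [(hnorm.comp hφ.tendsto_atTop).eventually_ge_atTop t] with k hk
  have hray := le_sub_mul_norm_sq_of_forall_add_norm_sq_le hconv (hx (φ k))
    (div_nonneg ht (hpos (φ k)).le) (div_le_one_of_le₀ hk (norm_nonneg _))
  have hrate := hmin _ (hε (φ k)) (x (φ k)) (hx (φ k))
  calc F (t • ‖x (φ k)‖⁻¹ • x (φ k)) = F ((t / ‖x (φ k)‖) • x (φ k)) := by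
        rw [smul_smul, div_eq_mul_inv]
    _ ≤ F 0 - t * (1 / ((φ k : ℝ) + 1) * ‖x (φ k)‖) := by
        refine hray.trans_eq ?_
        field_simp [(hpos (φ k)).ne']
    _ ≤ F 0 - t * δ := by gcongr

theorem convexOn_log_sum_mul_exp {κ : Type*} [Fintype κ] {w : κ → ℝ} (hw : ∀ i, 0 ≤ w i)
    (hw_pos : 0 < ∑ i, w i) (c : κ → ℝ) :
    ConvexOn ℝ Set.univ fun s : ℝ => Real.log (∑ i, w i * Real.exp (s * c i)) := by
  have hpos (s : ℝ) : 0 < ∑ i, w i * Real.exp (s * c i) := by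
    obtain ⟨i, hi, hwi⟩ : ∃ i ∈ Finset.univ, 0 < w i :=
      Finset.exists_lt_of_sum_lt (by simpa using hw_pos)
    exact Finset.sum_pos' (fun i _ => mul_nonneg (hw i) (Real.exp_nonneg _))
      ⟨i, hi, mul_pos hwi (Real.exp_pos _)⟩
  set L : ℝ → ℝ := fun s => Real.log (∑ i, w i * Real.exp (s * c i)) with hL
  have hnormalised (s : ℝ) : ∑ i, w i * Real.exp (s * c i - L s) = 1 := by
    simp only [Real.exp_sub, hL, Real.exp_log (hpos s), ← mul_div_assoc, ← Finset.sum_div,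
      div_self (hpos s).ne']
  refine ⟨convex_univ, fun s _ t _ a b ha hb hab => ?_⟩
  simp only [smul_eq_mul]
  rw [hL, Real.log_le_iff_le_exp (hpos _), ← hL, ← div_le_one (Real.exp_pos _), Finset.sum_div]
  calc ∑ i, w i * Real.exp ((a * s + b * t) * c i) / Real.exp (a * L s + b * L t)
      = ∑ i, w i * Real.exp (a * (s * c i - L s) + b * (t * c i - L t)) := by
        refine Finset.sum_congr rfl fun i _ => ?_
        rw [mul_div_assoc, ← Real.exp_sub]
        ring_nf
    _ ≤ ∑ i, w i * (a * Real.exp (s * c i - L s) + b * Real.exp (t * c i - L t)) := by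
        gcongr with i
        · exact hw i
        · exact convexOn_exp.2 (Set.mem_univ _) (Set.mem_univ _) ha hb hab
    _ = a * ∑ i, w i * Real.exp (s * c i - L s) + b * ∑ i, w i * Real.exp (t * c i - L t) := by
        simp only [mul_add, Finset.sum_add_distrib, Finset.mul_sum, mul_left_comm]
    _ = 1 := by rw [hnormalised, hnormalised, mul_one, mul_one, hab]

theorem nonpos_of_forall_add_mul_le {a b s : ℝ} (h : ∀ t, 0 ≤ t → a + t * s ≤ b) : s ≤ 0 := by
  by_contra! hs
  have := h ((b - a + |b - a| + 1) / s) (div_nonneg (by linarith [neg_abs_le (b - a)]) hs.le)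
  rw [div_mul_cancel₀ _ hs.ne'] at this
  linarith [abs_nonneg (b - a)]

end Asymptotics

section Exponential

open NormedSpace

variable {𝕜 n : Type*} [RCLike 𝕜] [Fintype n] [DecidableEq n]

theorem exists_unitary_eq_conj_diagonal {P : Matrix n n 𝕜} (hP : P.IsHermitian) :
    ∃ U ∈ unitaryGroup n 𝕜, ∃ p : n → ℝ, P = Uᴴ * diagonal (fun i => (p i : 𝕜)) * U := by
  refine ⟨star (hP.eigenvectorUnitary : Matrix n n 𝕜), Unitary.star_mem hP.eigenvectorUnitary.2,
    hP.eigenvalues, ?_⟩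
  conv_lhs => rw [hP.spectral_theorem, Unitary.conjStarAlgAut_apply]
  rw [star_eq_conjTranspose, conjTranspose_conjTranspose]
  rfl

theorem smul_conj_diagonal (t : ℝ) (U : Matrix n n 𝕜) (p : n → ℝ) :
    t • (Uᴴ * diagonal (fun i => (p i : 𝕜)) * U) =
      Uᴴ * diagonal (fun i => ((t * p i : ℝ) : 𝕜)) * U := by
  have hdiag : diagonal (fun i => ((t * p i : ℝ) : 𝕜)) = t • diagonal (fun i => (p i : 𝕜)) := by
    rw [← diagonal_smul]
    congr 1
    funext i
    rw [Pi.smul_apply, real_smul_eq_coe_mul, ofReal_mul]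
  rw [hdiag, Matrix.mul_smul, Matrix.smul_mul]

theorem exp_conj_diagonal {U : Matrix n n 𝕜} (hU : U ∈ unitaryGroup n 𝕜) (p : n → ℝ) :
    exp (Uᴴ * diagonal (fun i => (p i : 𝕜)) * U) =
      Uᴴ * diagonal (fun i => (Real.exp (p i) : 𝕜)) * U := by
  have hconj := Matrix.exp_units_conj
    ⟨Uᴴ, U, mem_unitaryGroup_iff'.mp hU, mem_unitaryGroup_iff.mp hU⟩ (diagonal fun i => (p i : 𝕜))
  rw [Units.val_mk, Units.inv_mk] at hconj
  rw [hconj, Matrix.exp_diagonal]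
  congr 3
  funext i
  rw [Pi.coe_exp, Real.exp_eq_exp_ℝ]
  exact (map_exp (algebraMap ℝ 𝕜) continuous_ofReal (p i)).symm

theorem trace_conj_diagonal {U : Matrix n n 𝕜} (hU : U ∈ unitaryGroup n 𝕜) (p : n → ℝ) :
    trace (Uᴴ * diagonal (fun i => (p i : 𝕜)) * U) = ((∑ i, p i : ℝ) : 𝕜) := by
  rw [trace_mul_comm, ← Matrix.mul_assoc, ← star_eq_conjTranspose, mem_unitaryGroup_iff.mp hU,
    Matrix.one_mul, trace_diagonal, ofReal_sum]

theorem frobenius_norm_sq_conj_diagonal {U : Matrix n n 𝕜} (hU : U ∈ unitaryGroup n 𝕜)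
    (p : n → ℝ) : ‖Uᴴ * diagonal (fun i => (p i : 𝕜)) * U‖ ^ 2 = ∑ i, p i ^ 2 := by
  have hU' := conjTranspose_mem_unitaryGroup hU
  have hnorm := frobenius_norm_mul_conjTranspose_unitary hU' (Uᴴ * diagonal fun i => (p i : 𝕜))
  rw [conjTranspose_conjTranspose] at hnorm
  rw [hnorm, frobenius_norm_unitary_mul hU', frobenius_norm_diagonal, PiLp.norm_sq_eq_of_L2]
  simp only [norm_ofReal, sq_abs]

theorem exp_half_mul_exp_half (P : Matrix n n 𝕜) :
    exp ((1 / 2 : ℝ) • P) * exp ((1 / 2 : ℝ) • P) = exp P := by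
  rw [← Matrix.exp_add_of_commute _ _ (Commute.refl _), ← add_smul, add_halves, one_smul]

theorem isHermitian_exp_half {P : Matrix n n 𝕜} (hP : P.IsHermitian) :
    (exp ((1 / 2 : ℝ) • P)).IsHermitian :=
  (hP.smul (IsSelfAdjoint.all (1 / 2 : ℝ))).exp

theorem commute_of_commute_exp {P M : Matrix n n 𝕜} (hP : P.IsHermitian)
    (h : Commute (exp P) M) : Commute P M := by
  -- Unification does not see through the topology of the Frobenius norm to find this instance.
  have hlog : cfc Real.log (exp P) = P :=
    @CFC.log_exp _ _ _ _ Matrix.IsHermitian.instContinuousFunctionalCalculus P hP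
  rw [← hlog]
  exact h.cfc_real Real.log

end Exponential

section KempfNess

open NormedSpace

variable {𝕜 ι n m : Type*} [RCLike 𝕜] [Fintype ι] [Fintype n] [DecidableEq n] [Fintype m]

theorem leftMarginal_scale_exp_half_of_commute {A : ι → Matrix n m 𝕜} {P : Matrix n n 𝕜}
    (hP : P.IsHermitian) (h : Matrix m m 𝕜) (hcomm : Commute P (leftMarginal (scale 1 h A))) :
    leftMarginal (scale (exp ((1 / 2 : ℝ) • P)) h A) = exp P * leftMarginal (scale 1 h A) := by
  have hcomm_half : Commute (exp ((1 / 2 : ℝ) • P)) (leftMarginal (scale 1 h A)) :=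
    (hcomm.smul_left (1 / 2 : ℝ)).exp_left
  rw [leftMarginal_scale, (isHermitian_exp_half hP).eq, Matrix.mul_assoc, ← hcomm_half.eq,
    ← Matrix.mul_assoc, exp_half_mul_exp_half]

variable [DecidableEq m]

/-- The Kempf–Ness function of the scaling problem in logarithmic coordinates: the mass of the
tuple scaled by `exp (P / 2)` and `exp (Q / 2)`. -/
noncomputable def kempfNess (A : ι → Matrix n m 𝕜) (P : Matrix n n 𝕜) (Q : Matrix m m 𝕜) : ℝ :=
  mass (scale (exp ((1 / 2 : ℝ) • P)) (exp ((1 / 2 : ℝ) • Q)) A)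

theorem kempfNess_zero_zero (A : ι → Matrix n m 𝕜) : kempfNess A 0 0 = mass A := by
  rw [kempfNess, smul_zero, smul_zero, exp_zero, exp_zero, scale_one_one]

theorem kempfNess_adj (A : ι → Matrix n m 𝕜) (P : Matrix n n 𝕜) (Q : Matrix m m 𝕜) :
    kempfNess (adj A) Q P = kempfNess A P Q := by
  rw [kempfNess, ← adj_scale, mass_adj, kempfNess]

theorem kempfNess_pos {A : ι → Matrix n m 𝕜} (hA : A ≠ 0) (P : Matrix n n 𝕜)
    (Q : Matrix m m 𝕜) : 0 < kempfNess A P Q :=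
  mass_pos (scale_ne_zero (Matrix.isUnit_exp ((1 / 2 : ℝ) • P))
    (Matrix.isUnit_exp ((1 / 2 : ℝ) • Q)) hA)

theorem continuous_kempfNess (A : ι → Matrix n m 𝕜) :
    Continuous fun x : Matrix n n 𝕜 × Matrix m m 𝕜 => kempfNess A x.1 x.2 := by
  have : Continuous (exp : Matrix n n 𝕜 → Matrix n n 𝕜) := exp_continuous
  have : Continuous (exp : Matrix m m 𝕜 → Matrix m m 𝕜) := exp_continuous
  simp only [kempfNess, mass, scale]
  fun_prop

theorem mass_scale_diagonal (x : n → ℝ) (y : m → ℝ) (A : ι → Matrix n m 𝕜) :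
    mass (scale (diagonal fun i => (x i : 𝕜)) (diagonal fun j => (y j : 𝕜)) A) =
      ∑ ℓ, ∑ i, ∑ j, ‖A ℓ i j‖ ^ 2 * (x i ^ 2 * y j ^ 2) := by
  simp only [mass_eq_sum, scale, diagonal_conjTranspose, diagonal_mul, mul_diagonal, norm_mul,
    Pi.star_apply, norm_star, norm_ofReal, mul_pow, sq_abs]
  refine Finset.sum_congr rfl fun ℓ _ => Finset.sum_congr rfl fun i _ =>
    Finset.sum_congr rfl fun j _ => ?_
  ring

theorem kempfNess_smul_conj_diagonal {U : Matrix n n 𝕜} {V : Matrix m m 𝕜}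
    (hU : U ∈ unitaryGroup n 𝕜) (hV : V ∈ unitaryGroup m 𝕜) (A : ι → Matrix n m 𝕜) (t : ℝ)
    (p : n → ℝ) (q : m → ℝ) :
    kempfNess A (t • (Uᴴ * diagonal (fun i => (p i : 𝕜)) * U))
        (t • (Vᴴ * diagonal (fun j => (q j : 𝕜)) * V)) =
      ∑ ℓ, ∑ i, ∑ j, ‖scale U V A ℓ i j‖ ^ 2 * Real.exp (t * (p i + q j)) := by
  have hexp (i : n) (j : m) : Real.exp (1 / 2 * (t * p i)) ^ 2 * Real.exp (1 / 2 * (t * q j)) ^ 2 =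
      Real.exp (t * (p i + q j)) := by
    simp only [← Real.exp_nat_mul, ← Real.exp_add]
    ring_nf
  simp only [kempfNess, smul_conj_diagonal, exp_conj_diagonal hU, exp_conj_diagonal hV]
  rw [← scale_scale, ← scale_scale, mass_scale_unitary (conjTranspose_mem_unitaryGroup hU)
    (conjTranspose_mem_unitaryGroup hV), mass_scale_diagonal]
  simp only [hexp]

theorem convexOn_log_kempfNess_smul {A : ι → Matrix n m 𝕜} (hA : A ≠ 0) {P : Matrix n n 𝕜}
    {Q : Matrix m m 𝕜} (hP : P.IsHermitian) (hQ : Q.IsHermitian) :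
    ConvexOn ℝ Set.univ fun s : ℝ => Real.log (kempfNess A (s • P) (s • Q)) := by
  obtain ⟨U, hU, p, rfl⟩ := exists_unitary_eq_conj_diagonal hP
  obtain ⟨V, hV, q, rfl⟩ := exists_unitary_eq_conj_diagonal hQ
  have hmass : 0 < ∑ x : ι × n × m, ‖scale U V A x.1 x.2.1 x.2.2‖ ^ 2 := by
    simp only [Fintype.sum_prod_type, ← mass_eq_sum, mass_scale_unitary hU hV, mass_pos hA]
  have hconv := convexOn_log_sum_mul_exp (fun x => sq_nonneg _) hmass fun x => p x.2.1 + q x.2.2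
  simpa only [kempfNess_smul_conj_diagonal hU hV, Fintype.sum_prod_type] using hconv

end KempfNess

section CriticalPoint

open NormedSpace

variable {𝕜 n : Type*} [RCLike 𝕜] [Fintype n]

/-- The real vector space of Hermitian matrices of trace zero: the logarithmic coordinates in which
scalings are parametrised, and the directions in which they degenerate. -/
def tracelessHermitian (n 𝕜 : Type*) [RCLike 𝕜] [Fintype n] : Submodule ℝ (Matrix n n 𝕜) where
  carrier := {P | P.IsHermitian ∧ trace P = 0}
  zero_mem' := ⟨isHermitian_zero, trace_zero n 𝕜⟩
  add_mem' := fun ⟨hP, hP'⟩ ⟨hQ, hQ'⟩ => ⟨hP.add hQ, by rw [trace_add, hP', hQ', add_zero]⟩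
  smul_mem' := fun c _ ⟨hP, hP'⟩ =>
    ⟨hP.smul (IsSelfAdjoint.all c), by rw [trace_smul, hP', smul_zero]⟩

theorem sub_inv_card_smul_one_mem_tracelessHermitian [DecidableEq n] [Nonempty n]
    {C : Matrix n n 𝕜} (hC : C.IsHermitian) (htrace : re (trace C) = 1) :
    C - (Fintype.card n : 𝕜)⁻¹ • (1 : Matrix n n 𝕜) ∈ tracelessHermitian n 𝕜 := by
  have hreal : starRingEnd 𝕜 (trace C) = trace C := by
    rw [← star_def, ← trace_conjTranspose, hC.eq]
  have hcard : IsSelfAdjoint (Fintype.card n : 𝕜)⁻¹ := (IsSelfAdjoint.natCast _).inv₀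
  refine ⟨hC.sub (isHermitian_one.smul hcard), ?_⟩
  rw [trace_sub, trace_smul, trace_one, smul_eq_mul, inv_mul_cancel₀ (by simp),
    ← conj_eq_iff_re.mp hreal, htrace, ofReal_one, sub_self]

theorem hasDerivAt_re_trace {F : ℝ → Matrix n n 𝕜} {F' : Matrix n n 𝕜} {s : ℝ}
    (hF : HasDerivAt F F' s) : HasDerivAt (fun s => re (trace (F s))) (re (trace F')) s :=
  let reTrace := (reLm ∘ₗ (traceLinearMap n 𝕜 𝕜).restrictScalars ℝ).toContinuousLinearMap
  reTrace.hasFDerivAt.comp_hasDerivAt s hF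

theorem hasDerivAt_exp_smul_zero [DecidableEq n] (K : Matrix n n 𝕜) :
    HasDerivAt (fun s : ℝ => exp (s • K)) K 0 :=
  (hasDerivAt_exp_smul_const (𝕂 := ℝ) K 0).congr_deriv (by rw [zero_smul, exp_zero, one_mul])

theorem frobenius_norm_add_smul_sq (P H : Matrix n n 𝕜) (s : ℝ) :
    ‖P + s • H‖ ^ 2 = ‖P‖ ^ 2 + 2 * s * re (trace (P * Hᴴ)) + s ^ 2 * ‖H‖ ^ 2 := by
  have hcross : re (trace (H * Pᴴ)) = re (trace (P * Hᴴ)) := by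
    rw [← re_trace_conjTranspose, conjTranspose_mul, conjTranspose_conjTranspose]
  simp only [frobenius_norm_sq_eq_re_trace, conjTranspose_add, conjTranspose_smul, star_trivial,
    Matrix.add_mul, Matrix.mul_add, Matrix.smul_mul, Matrix.mul_smul, trace_add, map_add,
    re_trace_smul, hcross]
  ring

theorem hasDerivAt_frobenius_norm_add_smul_sq (P H : Matrix n n 𝕜) :
    HasDerivAt (fun s : ℝ => ‖P + s • H‖ ^ 2) (2 * re (trace (P * Hᴴ))) 0 := by
  simp only [frobenius_norm_add_smul_sq]
  have hlinear := ((hasDerivAt_id (0 : ℝ)).const_mul 2).mul_const (re (trace (P * Hᴴ)))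
  have hquadratic := (hasDerivAt_pow 2 (0 : ℝ)).mul_const (‖H‖ ^ 2)
  exact ((hlinear.const_add (‖P‖ ^ 2)).add hquadratic).congr_deriv (by simp)

variable [DecidableEq n]

/-- The commutator of `M` and `E` generates a unitary curve along which the derivative is its own
squared norm. -/
theorem commute_of_forall_unitary_le {E M : Matrix n n 𝕜} (hE : E.IsHermitian)
    (hM : M.IsHermitian)
    (hmin : ∀ W ∈ unitaryGroup n 𝕜, re (trace (E * M)) ≤ re (trace (W * E * Wᴴ * M))) :
    Commute E M := by
  set K := M * E - E * M with hK
  have hKskew : Kᴴ = -K := by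
    rw [hK, conjTranspose_sub, conjTranspose_mul, conjTranspose_mul, hE.eq, hM.eq, neg_sub]
  let f (s : ℝ) : ℝ := re (trace (exp (s • K) * E * exp (s • -K) * M))
  have hzero : f 0 = re (trace (E * M)) := by simp [f]
  have hlocal : IsLocalMin f 0 := Eventually.of_forall fun s => by
    have hskew : s • K ∈ skewAdjoint (Matrix n n 𝕜) := by
      rw [skewAdjoint.mem_iff, star_eq_conjTranspose, conjTranspose_smul, star_trivial, hKskew,
        smul_neg]
    have hW : exp (s • K) ∈ unitaryGroup n 𝕜 := exp_mem_unitary_of_mem_skewAdjoint hskew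
    have hWstar : (exp (s • K))ᴴ = exp (s • -K) := by
      rw [← Matrix.exp_conjTranspose, conjTranspose_smul, star_trivial, hKskew]
    simpa only [hzero, f, hWstar] using hmin _ hW
  have hderiv : HasDerivAt f (‖K‖ ^ 2) 0 := by
    have hcurve := (((hasDerivAt_exp_smul_zero K).mul_const E).mul
      (hasDerivAt_exp_smul_zero (-K))).mul_const M
    refine (hasDerivAt_re_trace hcurve).congr_deriv ?_
    rw [frobenius_norm_sq_eq_re_trace, hKskew, zero_smul, zero_smul, exp_zero, Matrix.mul_one,
      Matrix.one_mul, Matrix.add_mul, trace_add, Matrix.mul_neg, Matrix.neg_mul, trace_neg,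
      trace_mul_comm (E * K), ← Matrix.mul_assoc, trace_mul_comm (M * E), Matrix.mul_assoc,
      ← sub_eq_add_neg, ← trace_sub, ← Matrix.mul_sub, hK, neg_sub]
  have hKzero : K = 0 := by simpa using hlocal.hasDerivAt_eq_zero hderiv
  exact (sub_eq_zero.mp hKzero).symm

/-- `P ↦ log (re tr (exp P * M)) + ε / 2 * ‖P‖ ^ 2`, the restriction of the regularised Kempf–Ness
potential to one of its two variables. -/
noncomputable def regLogTrace (ε : ℝ) (M P : Matrix n n 𝕜) : ℝ :=
  Real.log (re (trace (exp P * M))) + ε / 2 * ‖P‖ ^ 2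

section Stationary

variable {M P : Matrix n n 𝕜} {ε : ℝ}

theorem commute_of_forall_regLogTrace_le (hM : M.IsHermitian)
    (hpos : ∀ P' ∈ tracelessHermitian n 𝕜, 0 < re (trace (exp P' * M)))
    (hP : P ∈ tracelessHermitian n 𝕜)
    (hmin : ∀ P' ∈ tracelessHermitian n 𝕜, regLogTrace ε M P ≤ regLogTrace ε M P') :
    Commute P M := by
  refine commute_of_commute_exp hP.1 (commute_of_forall_unitary_le hP.1.exp hM fun W hW => ?_)
  have hconj_mem : W * P * Wᴴ ∈ tracelessHermitian n 𝕜 := by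
    refine ⟨isHermitian_mul_mul_conjTranspose W hP.1, ?_⟩
    rw [trace_mul_cycle, ← star_eq_conjTranspose, mem_unitaryGroup_iff'.mp hW, Matrix.one_mul, hP.2]
  have hconj_norm : ‖W * P * Wᴴ‖ = ‖P‖ := by
    rw [frobenius_norm_mul_conjTranspose_unitary hW, frobenius_norm_unitary_mul hW]
  have hconj_exp : exp (W * P * Wᴴ) = W * exp P * Wᴴ := Matrix.exp_units_conj
    ⟨W, Wᴴ, mem_unitaryGroup_iff.mp hW, mem_unitaryGroup_iff'.mp hW⟩ P
  have hle := hmin _ hconj_mem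
  rw [regLogTrace, regLogTrace, hconj_norm, add_le_add_iff_right,
    Real.log_le_log_iff (hpos _ hP) (hpos _ hconj_mem), hconj_exp] at hle
  exact hle

theorem re_trace_add_eq_zero_of_forall_regLogTrace_le (hpos : 0 < re (trace (exp P * M)))
    (hP : P ∈ tracelessHermitian n 𝕜)
    (hmin : ∀ P' ∈ tracelessHermitian n 𝕜, regLogTrace ε M P ≤ regLogTrace ε M P')
    {H : Matrix n n 𝕜} (hH : H ∈ tracelessHermitian n 𝕜) (hcomm : Commute P H) :
    re (trace (H * (exp P * M))) / re (trace (exp P * M)) + ε * re (trace (P * H)) = 0 := by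
  have hexp (s : ℝ) : exp (P + s • H) = exp (s • H) * exp P := by
    rw [add_comm, Matrix.exp_add_of_commute _ _ (hcomm.symm.smul_left s)]
  let f (s : ℝ) : ℝ := regLogTrace ε M (P + s • H)
  have hlocal : IsLocalMin f 0 := Eventually.of_forall fun s => by
    simpa [f] using hmin _ (add_mem hP (Submodule.smul_mem _ s hH))
  have hlog := (hasDerivAt_re_trace ((hasDerivAt_exp_smul_zero H).mul_const (exp P * M))).log
    (by simpa using hpos.ne')
  have hderiv := hlog.add ((hasDerivAt_frobenius_norm_add_smul_sq P H).const_mul (ε / 2))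
  have hf : HasDerivAt f _ 0 := hderiv.congr_of_eventuallyEq
    (Eventually.of_forall fun s => by simp only [f, regLogTrace, hexp, Matrix.mul_assoc]; rfl)
  have hstat := hlocal.hasDerivAt_eq_zero hf
  rw [zero_smul, exp_zero, Matrix.one_mul, hH.1.eq] at hstat
  linarith

/-- Stationarity is tested in the direction of the gradient `H` itself, which commutes with `P`, so
that the derivative in that direction is `‖H‖ ^ 2`. -/
theorem exp_mul_sub_eq_of_forall_regLogTrace_le (hM : M.IsHermitian)
    (hpos : ∀ P' ∈ tracelessHermitian n 𝕜, 0 < re (trace (exp P' * M)))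
    (hP : P ∈ tracelessHermitian n 𝕜)
    (hmin : ∀ P' ∈ tracelessHermitian n 𝕜, regLogTrace ε M P ≤ regLogTrace ε M P') :
    (re (trace (exp P * M)))⁻¹ • (exp P * M) - (Fintype.card n : 𝕜)⁻¹ • (1 : Matrix n n 𝕜) =
      -(ε • P) := by
  have hcomm := commute_of_forall_regLogTrace_le hM hpos hP hmin
  have hcomm_exp : Commute (exp P) M := hcomm.exp_left
  set Φ := re (trace (exp P * M))
  set C := Φ⁻¹ • (exp P * M) with hC
  have hΦ : 0 < Φ := hpos P hP
  have hCherm : C.IsHermitian :=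
    ((hP.1.exp.commute_iff hM).mp hcomm_exp).smul (IsSelfAdjoint.all Φ⁻¹)
  have hCtrace : re (trace C) = 1 := by rw [hC, re_trace_smul, inv_mul_cancel₀ hΦ.ne']
  have : Nonempty n := by
    by_contra! hempty
    simp [Φ, trace] at hΦ
  set H := C - (Fintype.card n : 𝕜)⁻¹ • (1 : Matrix n n 𝕜) + ε • P with hHdef
  have hH : H ∈ tracelessHermitian n 𝕜 :=
    add_mem (sub_inv_card_smul_one_mem_tracelessHermitian hCherm hCtrace)
      (Submodule.smul_mem _ ε hP)
  have hPH : Commute P H :=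
    ((((Commute.refl P).exp_right.mul_right hcomm).smul_right _).sub_right
      ((Commute.one_right P).smul_right _)).add_right ((Commute.refl P).smul_right ε)
  have hstat := re_trace_add_eq_zero_of_forall_regLogTrace_le hΦ hP hmin hH hPH
  have hHzero : ‖H‖ ^ 2 = 0 := by
    rw [frobenius_norm_sq_eq_re_trace, hH.1.eq]
    nth_rw 1 [hHdef]
    rw [← hstat, Matrix.add_mul, Matrix.sub_mul, hC, Matrix.smul_mul, Matrix.smul_mul,
      Matrix.smul_mul, Matrix.one_mul, trace_add, trace_sub, map_add, map_sub, re_trace_smul,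
      re_trace_smul, trace_smul (Fintype.card n : 𝕜)⁻¹, hH.2, smul_zero, trace_mul_comm, map_zero,
      sub_zero, inv_mul_eq_div]
  rw [sq_eq_zero_iff, norm_eq_zero] at hHzero
  exact eq_neg_of_add_eq_zero_left hHzero

end Stationary

end CriticalPoint

section StrongDuality

open NormedSpace

variable {𝕜 ι n m : Type*} [RCLike 𝕜] [Fintype ι] [Fintype n] [DecidableEq n] [Fintype m]
  [DecidableEq m] {A : ι → Matrix n m 𝕜} {P : Matrix n n 𝕜} {Q : Matrix m m 𝕜} {ε : ℝ}

theorem kempfNess_eq_re_trace (A : ι → Matrix n m 𝕜) (hP : P.IsHermitian) (Q : Matrix m m 𝕜) :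
    kempfNess A P Q =
      re (trace (exp P * leftMarginal (scale 1 (exp ((1 / 2 : ℝ) • Q)) A))) := by
  rw [kempfNess, mass_eq_re_trace, leftMarginal_scale, (isHermitian_exp_half hP).eq,
    trace_mul_comm, ← Matrix.mul_assoc, exp_half_mul_exp_half]

theorem leftMarginal_sub_eq_of_forall_le (hA : A ≠ 0) (hP : P ∈ tracelessHermitian n 𝕜)
    (hmin : ∀ P' ∈ tracelessHermitian n 𝕜, Real.log (kempfNess A P Q) + ε / 2 * ‖P‖ ^ 2 ≤
      Real.log (kempfNess A P' Q) + ε / 2 * ‖P'‖ ^ 2) :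
    (kempfNess A P Q)⁻¹ •
        leftMarginal (scale (exp ((1 / 2 : ℝ) • P)) (exp ((1 / 2 : ℝ) • Q)) A) -
      (Fintype.card n : 𝕜)⁻¹ • (1 : Matrix n n 𝕜) = -(ε • P) := by
  set M := leftMarginal (scale 1 (exp ((1 / 2 : ℝ) • Q)) A)
  have hM : M.IsHermitian := leftMarginal_isHermitian _
  have hpos (P' : Matrix n n 𝕜) (hP' : P' ∈ tracelessHermitian n 𝕜) :
      0 < re (trace (exp P' * M)) := by
    rw [← kempfNess_eq_re_trace A hP'.1]
    exact kempfNess_pos hA P' Q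
  have hmin' (P' : Matrix n n 𝕜) (hP' : P' ∈ tracelessHermitian n 𝕜) :
      regLogTrace ε M P ≤ regLogTrace ε M P' := by
    have := hmin P' hP'
    rwa [kempfNess_eq_re_trace A hP.1, kempfNess_eq_re_trace A hP'.1] at this
  rw [leftMarginal_scale_exp_half_of_commute hP.1 _
    (commute_of_forall_regLogTrace_le hM hpos hP hmin'), kempfNess_eq_re_trace A hP.1]
  exact exp_mul_sub_eq_of_forall_regLogTrace_le hM hpos hP hmin'

theorem exists_marginalDefect_eq_of_forall_le (hA : A ≠ 0) (hε : 0 ≤ ε)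
    (hP : P ∈ tracelessHermitian n 𝕜) (hQ : Q ∈ tracelessHermitian m 𝕜)
    (hmin : ∀ P' ∈ tracelessHermitian n 𝕜, ∀ Q' ∈ tracelessHermitian m 𝕜,
      Real.log (kempfNess A P Q) + ε / 2 * (‖P‖ ^ 2 + ‖Q‖ ^ 2) ≤
        Real.log (kempfNess A P' Q') + ε / 2 * (‖P'‖ ^ 2 + ‖Q'‖ ^ 2)) :
    ∃ (g : GL n 𝕜) (h : GL m 𝕜), mass (scale g.1 h.1 A) = 1 ∧
      marginalDefect (scale g.1 h.1 A) = ε * √(‖P‖ ^ 2 + ‖Q‖ ^ 2) := by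
  set Φ := kempfNess A P Q with hΦ
  set g := exp ((1 / 2 : ℝ) • P)
  set h := exp ((1 / 2 : ℝ) • Q)
  have hΦpos : 0 < Φ := kempfNess_pos hA P Q
  have hleft : Φ⁻¹ • leftMarginal (scale g h A) - (Fintype.card n : 𝕜)⁻¹ • (1 : Matrix n n 𝕜) =
      -(ε • P) :=
    leftMarginal_sub_eq_of_forall_le hA hP fun P' hP' => by linarith [hmin P' hP' Q hQ]
  have hright : Φ⁻¹ • leftMarginal (adj (scale g h A)) -
      (Fintype.card m : 𝕜)⁻¹ • (1 : Matrix m m 𝕜) = -(ε • Q) := by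
    rw [adj_scale, hΦ, ← kempfNess_adj]
    refine leftMarginal_sub_eq_of_forall_le (adj_ne_zero hA) hQ fun Q' hQ' => ?_
    rw [kempfNess_adj, kempfNess_adj]
    linarith [hmin P hP Q' hQ']
  have hsqrt : √Φ⁻¹ ^ 2 = Φ⁻¹ := Real.sq_sqrt (inv_nonneg.mpr hΦpos.le)
  obtain ⟨g', h', hscale⟩ := exists_scale_eq_smul_scale (Matrix.isUnit_exp ((1 / 2 : ℝ) • P))
    (Matrix.isUnit_exp ((1 / 2 : ℝ) • Q)) (Real.sqrt_ne_zero'.mpr (inv_pos.mpr hΦpos)) A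
  refine ⟨g', h', ?_, ?_⟩
  · rw [hscale, mass_smul, hsqrt]
    exact inv_mul_cancel₀ hΦpos.ne'
  · rw [hscale, marginalDefect, adj_smul, leftMarginal_smul, leftMarginal_smul, hsqrt, hleft,
      hright, norm_neg, norm_neg, norm_smul, norm_smul, mul_pow, mul_pow, ← mul_add,
      Real.sqrt_mul (sq_nonneg _), Real.sqrt_sq (norm_nonneg _), Real.norm_of_nonneg hε]

theorem exists_tracelessHermitian_forall_log_kempfNess_le (hA : A ≠ 0) {δ : ℝ} (hδ : 0 < δ)
    (hdefect : ∀ (g : GL n 𝕜) (h : GL m 𝕜), mass (scale g.1 h.1 A) = 1 →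
      δ ≤ marginalDefect (scale g.1 h.1 A)) :
    ∃ P ∈ tracelessHermitian n 𝕜, ∃ Q ∈ tracelessHermitian m 𝕜, ‖P‖ ^ 2 + ‖Q‖ ^ 2 = 1 ∧
      ∀ t, 0 ≤ t → Real.log (kempfNess A (t • P) (t • Q)) ≤ Real.log (mass A) - t * δ := by
  let F (x : WithLp 2 (tracelessHermitian n 𝕜 × tracelessHermitian m 𝕜)) : ℝ :=
    Real.log (kempfNess A x.fst x.snd)
  have hcont : Continuous F := by
    have hpair : Continuous fun x : WithLp 2 (tracelessHermitian n 𝕜 × tracelessHermitian m 𝕜) =>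
        ((x.fst : Matrix n n 𝕜), (x.snd : Matrix m m 𝕜)) := by fun_prop
    exact ((continuous_kempfNess A).comp hpair).log fun x => (kempfNess_pos hA _ _).ne'
  have hconv (x) : ConvexOn ℝ Set.univ fun s : ℝ => F (s • x) :=
    convexOn_log_kempfNess_smul hA x.fst.2.1 x.snd.2.1
  have hnorm (x : WithLp 2 (tracelessHermitian n 𝕜 × tracelessHermitian m 𝕜)) :
      ‖x‖ ^ 2 = ‖(x.fst : Matrix n n 𝕜)‖ ^ 2 + ‖(x.snd : Matrix m m 𝕜)‖ ^ 2 :=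
    WithLp.prod_norm_sq_eq_of_L2 x
  have hleft : FiniteDimensional ℝ (tracelessHermitian n 𝕜) := inferInstance
  have hright : FiniteDimensional ℝ (tracelessHermitian m 𝕜) := inferInstance
  obtain ⟨u, hu, hray⟩ := exists_unit_forall_le_sub_mul hcont hconv hδ fun ε hε x hmin => by
    obtain ⟨g, h, hmass, heq⟩ := exists_marginalDefect_eq_of_forall_le hA hε.le x.fst.2 x.snd.2
      fun P hP Q hQ => by
        have hle := hmin (WithLp.toLp 2 (⟨P, hP⟩, ⟨Q, hQ⟩))
        rwa [hnorm, hnorm] at hle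
    rw [← hnorm, Real.sqrt_sq (norm_nonneg x)] at heq
    exact heq ▸ hdefect g h hmass
  refine ⟨u.fst, u.fst.2, u.snd, u.snd.2, by rw [← hnorm, hu, one_pow], fun t ht => ?_⟩
  rw [← kempfNess_zero_zero A]
  exact hray t ht

theorem weight_le_neg_of_forall_log_kempfNess_le {U : Matrix n n 𝕜} {V : Matrix m m 𝕜}
    (hU : U ∈ unitaryGroup n 𝕜) (hV : V ∈ unitaryGroup m 𝕜) {p : n → ℝ}
    {q : m → ℝ} {c δ : ℝ}
    (hdecay : ∀ t, 0 ≤ t → Real.log (kempfNess A (t • (Uᴴ * diagonal (fun i => (p i : 𝕜)) * U))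
      (t • (Vᴴ * diagonal (fun j => (q j : 𝕜)) * V))) ≤ c - t * δ)
    {ℓ : ι} {i : n} {j : m} (hij : scale U V A ℓ i j ≠ 0) : p i + q j ≤ -δ := by
  have hw : 0 < ‖scale U V A ℓ i j‖ ^ 2 := pow_pos (norm_pos_iff.mpr hij) 2
  suffices h : p i + q j + δ ≤ 0 by linarith
  refine nonpos_of_forall_add_mul_le (a := Real.log (‖scale U V A ℓ i j‖ ^ 2)) (b := c)
    fun t ht => ?_
  have hterm : ‖scale U V A ℓ i j‖ ^ 2 * Real.exp (t * (p i + q j)) ≤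
      kempfNess A (t • (Uᴴ * diagonal (fun i => (p i : 𝕜)) * U))
        (t • (Vᴴ * diagonal (fun j => (q j : 𝕜)) * V)) := by
    have hsingle := Finset.single_le_sum (f := fun x : ι × n × m =>
      ‖scale U V A x.1 x.2.1 x.2.2‖ ^ 2 * Real.exp (t * (p x.2.1 + q x.2.2)))
      (fun x _ => by positivity) (Finset.mem_univ (ℓ, i, j))
    rw [kempfNess_smul_conj_diagonal hU hV]
    simpa only [Fintype.sum_prod_type] using hsingle
  have hlog := (Real.log_le_log (by positivity) hterm).trans (hdecay t ht)
  rw [Real.log_mul hw.ne' (Real.exp_ne_zero _), Real.log_exp] at hlog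
  linarith

theorem exists_diagonal_mul_mem_specialUnitaryGroup {U : Matrix n n 𝕜}
    (hU : U ∈ unitaryGroup n 𝕜) : ∃ d : n → 𝕜, diagonal d * U ∈ specialUnitaryGroup n 𝕜 := by
  rcases isEmpty_or_nonempty n with hn | ⟨⟨i⟩⟩
  · exact ⟨0, Subsingleton.elim 1 (diagonal 0 * U) ▸ one_mem (specialUnitaryGroup n 𝕜)⟩
  have hdet : U.det ∈ unitary 𝕜 := det_of_mem_unitary hU
  refine ⟨Pi.mulSingle i (star U.det), mem_specialUnitaryGroup_iff.mpr ⟨mul_mem ?_ hU, ?_⟩⟩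
  · have hunit : Pi.mulSingle i (star U.det) * star (Pi.mulSingle i (star U.det)) =
        (1 : n → 𝕜) := by
      rw [← Pi.star_mulSingle, star_star, Pi.star_mulSingle, ← Pi.mulSingle_mul,
        Unitary.star_mul_self_of_mem hdet, Pi.mulSingle_one]
    rw [mem_unitaryGroup_iff, star_eq_conjTranspose, diagonal_conjTranspose, diagonal_mul_diagonal]
    exact (congrArg diagonal hunit).trans diagonal_one
  · rw [det_mul, det_diagonal, Fintype.prod_pi_mulSingle', Unitary.star_mul_self_of_mem hdet]

theorem exists_specialUnitary_forall_weight_le (hA : A ≠ 0) {δ : ℝ} (hδ : 0 < δ)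
    (hdefect : ∀ (g : GL n 𝕜) (h : GL m 𝕜), mass (scale g.1 h.1 A) = 1 →
      δ ≤ marginalDefect (scale g.1 h.1 A)) :
    ∃ σ ∈ specialUnitaryGroup n 𝕜, ∃ τ ∈ specialUnitaryGroup m 𝕜, ∃ (p : n → ℝ) (q : m → ℝ),
      ∑ i, p i = 0 ∧ ∑ j, q j = 0 ∧ ∑ i, p i ^ 2 + ∑ j, q j ^ 2 = 1 ∧
        ∀ ℓ i j, scale σ τ A ℓ i j ≠ 0 → p i + q j ≤ -δ := by
  obtain ⟨P, hP, Q, hQ, hnorm, hdecay⟩ :=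
    exists_tracelessHermitian_forall_log_kempfNess_le hA hδ hdefect
  obtain ⟨U, hU, p, rfl⟩ := exists_unitary_eq_conj_diagonal hP.1
  obtain ⟨V, hV, q, rfl⟩ := exists_unitary_eq_conj_diagonal hQ.1
  obtain ⟨d, hd⟩ := exists_diagonal_mul_mem_specialUnitaryGroup hU
  obtain ⟨e, he⟩ := exists_diagonal_mul_mem_specialUnitaryGroup hV
  rw [frobenius_norm_sq_conj_diagonal hU, frobenius_norm_sq_conj_diagonal hV] at hnorm
  refine ⟨_, hd, _, he, p, q, ?_, ?_, hnorm, fun ℓ i j hij => ?_⟩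
  · simpa only [trace_conj_diagonal hU, ofReal_eq_zero] using hP.2
  · simpa only [trace_conj_diagonal hV, ofReal_eq_zero] using hQ.2
  · refine weight_le_neg_of_forall_log_kempfNess_le hU hV hdecay (ℓ := ℓ) fun hzero => hij ?_
    rw [← scale_scale, scale, diagonal_conjTranspose, mul_diagonal, diagonal_mul, hzero, mul_zero,
      zero_mul]

/-- The values of the primal problem: the defects of the invertible scalings of mass one. -/
def primalValues (A : ι → Matrix n m 𝕜) : Set ℝ :=
  {r | ∃ (g : GL n 𝕜) (h : GL m 𝕜),
    mass (scale g.1 h.1 A) = 1 ∧ r = marginalDefect (scale g.1 h.1 A)}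

/-- The values of the dual problem: minus the largest weight, over pairs of orthonormal frames and
trace-free weights in the unit ball. -/
def dualValues (A : ι → Matrix n m 𝕜) : Set ℝ :=
  {r | ∃ σ ∈ specialUnitaryGroup n 𝕜, ∃ τ ∈ specialUnitaryGroup m 𝕜,
    ∃ (p : n → ℝ) (q : m → ℝ), ∑ i, p i = 0 ∧ ∑ j, q j = 0 ∧
      ∑ i, p i ^ 2 + ∑ j, q j ^ 2 ≤ 1 ∧ r = -maxWeight (scale σ τ A) p q}

theorem primalValues_nonempty (hA : A ≠ 0) : (primalValues A).Nonempty := by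
  have hinv : 0 < (mass A)⁻¹ := inv_pos.mpr (mass_pos hA)
  obtain ⟨g, h, hscale⟩ := exists_scale_eq_smul_scale isUnit_one isUnit_one
    (Real.sqrt_ne_zero'.mpr hinv) A
  refine ⟨_, g, h, ?_, rfl⟩
  rw [hscale, scale_one_one, mass_smul, Real.sq_sqrt hinv.le, inv_mul_cancel₀ (mass_pos hA).ne']

theorem zero_le_of_mem_primalValues {r : ℝ} (hr : r ∈ primalValues A) : 0 ≤ r := by
  obtain ⟨g, h, -, rfl⟩ := hr
  exact Real.sqrt_nonneg _

theorem le_of_mem_dualValues_of_mem_primalValues {d r : ℝ} (hd : d ∈ dualValues A)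
    (hr : r ∈ primalValues A) : d ≤ r := by
  obtain ⟨σ, hσ, τ, hτ, p, q, hp, hq, hpq, rfl⟩ := hd
  obtain ⟨g, h, hmass, rfl⟩ := hr
  exact neg_maxWeight_le_marginalDefect hmass hσ.1 hτ.1 hp hq hpq

theorem exists_mem_dualValues_ge (hA : A ≠ 0) {δ : ℝ} (hδ : δ ∈ lowerBounds (primalValues A)) :
    ∃ d ∈ dualValues A, δ ≤ d := by
  have hscale {σ : Matrix n n 𝕜} {τ : Matrix m m 𝕜} (hσ : σ ∈ unitaryGroup n 𝕜)
      (hτ : τ ∈ unitaryGroup m 𝕜) : scale σ τ A ≠ 0 :=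
    scale_ne_zero (Unitary.isUnit_coe (U := ⟨σ, hσ⟩)) (Unitary.isUnit_coe (U := ⟨τ, hτ⟩)) hA
  rcases le_or_gt δ 0 with hnonpos | hpos
  · refine ⟨_, ⟨1, one_mem _, 1, one_mem _, 0, 0, by simp, by simp, by simp, rfl⟩, ?_⟩
    exact hnonpos.trans (neg_nonneg.mpr (maxWeight_le (hscale (one_mem _) (one_mem _)) (by simp)))
  · obtain ⟨σ, hσ, τ, hτ, p, q, hp, hq, hpq, hweight⟩ :=
      exists_specialUnitary_forall_weight_le hA hpos fun g h hmass => hδ ⟨g, h, hmass, rfl⟩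
    exact ⟨_, ⟨σ, hσ, τ, hτ, p, q, hp, hq, hpq.le, rfl⟩,
      le_neg_of_le_neg (maxWeight_le (hscale hσ.1 hτ.1) hweight)⟩

end StrongDuality

theorem frobNorm_eq_norm {a b : ℕ} (M : Matrix (Fin a) (Fin b) ℂ) : frobNorm M = ‖M‖ := by
  rw [frobNorm, ← frobenius_norm_sq_eq_sum, Real.sqrt_sq (norm_nonneg M)]

theorem ne_zero_of_iInf_ker_mulVecLin_eq_bot {R ι n m : Type*} [CommSemiring R] [Nontrivial R]
    [Fintype m] [Nonempty m] {A : ι → Matrix n m R} (hker : ⨅ ℓ, (A ℓ).mulVecLin.ker = ⊥) :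
    A ≠ 0 := by
  rintro rfl
  simp only [Pi.zero_apply, mulVecLin_zero, LinearMap.ker_zero, iInf_top] at hker
  exact top_ne_bot hker

end OperatorScaling

open OperatorScaling

theorem operator_scaling_duality_general {𝕜 ι n m : Type*} [RCLike 𝕜] [Fintype ι] [Fintype n]
    [DecidableEq n] [Fintype m] [DecidableEq m] {A : ι → Matrix n m 𝕜} (hA : A ≠ 0) :
    sInf (primalValues A) = sSup (dualValues A) := by
  obtain ⟨r, hr⟩ := primalValues_nonempty hA
  have hbddBelow : BddBelow (primalValues A) := ⟨0, fun _ => zero_le_of_mem_primalValues⟩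
  have hbddAbove : BddAbove (dualValues A) :=
    ⟨r, fun _ hd => le_of_mem_dualValues_of_mem_primalValues hd hr⟩
  obtain ⟨d, hd, hle⟩ := exists_mem_dualValues_ge hA fun _ => csInf_le hbddBelow
  refine le_antisymm (hle.trans (le_csSup hbddAbove hd)) (csSup_le ⟨d, hd⟩ fun d hd => ?_)
  exact le_csInf ⟨r, hr⟩ fun r hr => le_of_mem_dualValues_of_mem_primalValues hd hr

/-- Duality theorem for the scalability limit of operator scaling (Theorem 4.11):
for a tuple `A = (A₁,…,A_N)` of `n×m` complex matrices with trivial left and right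
common kernels, the infimum, over `g ∈ GL_n(ℂ)`, `h ∈ GL_m(ℂ)` with
`Σ_ℓ ‖g A_ℓ hᴴ‖² = 1`, of
`(‖Σ_ℓ g A_ℓ hᴴ h A_ℓᴴ gᴴ − (1/n)·Iₙ‖² + ‖Σ_ℓ h A_ℓᴴ gᴴ g A_ℓ hᴴ − (1/m)·Iₘ‖²)^{1/2}`
equals the supremum, over special unitary `σ, τ` and vectors `p, q` with
`Σᵢ pᵢ = Σⱼ qⱼ = 0` and `‖p‖² + ‖q‖² ≤ 1`, of
`−max{ pᵢ + qⱼ : (σ A_ℓ τᴴ)_{ij} ≠ 0 for some ℓ }`. -/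
theorem operator_scaling_duality {N n m : ℕ} (hN : 1 ≤ N) (hn : 1 ≤ n) (hm : 1 ≤ m)
    (A : Fin N → Matrix (Fin n) (Fin m) ℂ)
    (hker : (⨅ ℓ, LinearMap.ker (Matrix.mulVecLin (A ℓ))) = ⊥)
    (hker' : (⨅ ℓ, LinearMap.ker (Matrix.mulVecLin ((A ℓ)ᴴ))) = ⊥) :
    sInf { r : ℝ | ∃ (g : GL (Fin n) ℂ) (h : GL (Fin m) ℂ),
        (∑ ℓ, (frobNorm ((g : Matrix (Fin n) (Fin n) ℂ) * A ℓ
            * ((h : Matrix (Fin m) (Fin m) ℂ))ᴴ)) ^ 2) = 1 ∧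
        r = Real.sqrt
          ((frobNorm ((∑ ℓ, (g : Matrix (Fin n) (Fin n) ℂ) * A ℓ
                * ((h : Matrix (Fin m) (Fin m) ℂ))ᴴ * (h : Matrix (Fin m) (Fin m) ℂ)
                * (A ℓ)ᴴ * ((g : Matrix (Fin n) (Fin n) ℂ))ᴴ)
              - ((n : ℂ))⁻¹ • (1 : Matrix (Fin n) (Fin n) ℂ))) ^ 2
           + (frobNorm ((∑ ℓ, (h : Matrix (Fin m) (Fin m) ℂ) * (A ℓ)ᴴ
                * ((g : Matrix (Fin n) (Fin n) ℂ))ᴴ * (g : Matrix (Fin n) (Fin n) ℂ)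
                * A ℓ * ((h : Matrix (Fin m) (Fin m) ℂ))ᴴ)
              - ((m : ℂ))⁻¹ • (1 : Matrix (Fin m) (Fin m) ℂ))) ^ 2) }
    = sSup { r : ℝ | ∃ σ ∈ Matrix.specialUnitaryGroup (Fin n) ℂ,
        ∃ τ ∈ Matrix.specialUnitaryGroup (Fin m) ℂ,
        ∃ (p : Fin n → ℝ) (q : Fin m → ℝ),
          (∑ i, p i) = 0 ∧ (∑ j, q j) = 0 ∧
          (∑ i, (p i) ^ 2) + (∑ j, (q j) ^ 2) ≤ 1 ∧
          r = -sSup {c : ℝ | ∃ i j, (∃ ℓ, (σ * A ℓ * τᴴ) i j ≠ 0) ∧ c = p i + q j} } := by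
  have : Nonempty (Fin m) := Fin.pos_iff_nonempty.mp hm
  simpa only [primalValues, dualValues, mass, marginalDefect, leftMarginal, scale, adj, maxWeight,
    frobNorm_eq_norm, conjTranspose_mul, conjTranspose_conjTranspose, Matrix.mul_assoc,
    Fintype.card_fin] using
    operator_scaling_duality_general (ne_zero_of_iInf_ker_mulVecLin_eq_bot hker)
end

section
/- Regularity of a matrix pencil is equivalent to operator scalability (Corollary 4.23): let A₁, A₂ be n×m complex matrices with ker A₁ ∩ ker A₂ = {0} and ker A₁† ∩ ker A₂† = {0}. Then the matrix pencil sA₁ + A₂ is regular — i.e., n = m and det(sA₁ + A₂) ≠ 0 for some s ∈ ℂ — if and only if n = m and the pair (A₁,A₂) is (1/n, 1/n)-scalable, meaning: for every ε > 0 there exist g, h ∈ GL_n(ℂ) such that ‖Σ_{ℓ=1}^2 g A_ℓ h† h A_ℓ† g† − (1/n)·Iₙ‖² + ‖Σ_{ℓ=1}^2 h A_ℓ† g† g A_ℓ h† − (1/n)·Iₙ‖² ≤ ε². -/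
open Matrix

/-!
If `S = sA₁ + A₂` is invertible, then `S⁻¹A₂ = 1 - s • S⁻¹A₁`, so one change of basis makes `S⁻¹A₁`
and `S⁻¹A₂` triangular at once, and no diagonal position vanishes in both. Conjugating by the
one-parameter group `diag (exp (t * w i))` contracts both matrices to their diagonal parts, which
are visibly scalable, and scalability passes back from a limit of an orbit to the orbit itself.

Conversely, if `det (sA₁ + A₂)` vanishes for all `s`, kernel vectors for different values of `s`
span a subspace `U` with `dim (A₁U + A₂U) < dim U`. Such a shrunk subspace survives every scaling,
but when both marginals are close to `c • 1`, summing `‖A_ℓ e‖²` over an orthonormal basis of `U`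
gives about `c * dim U`, while Bessel's inequality bounds the same sum by about
`c * dim (A₁U + A₂U)`.
-/

open Filter Module Topology
open scoped Matrix.Norms.Frobenius

lemma frobNorm_eq_norm {a b : ℕ} (M : Matrix (Fin a) (Fin b) ℂ) : frobNorm M = ‖M‖ := by
  simp only [frobNorm, frobenius_norm_def, Real.sqrt_eq_rpow, Real.rpow_two]

section Scalability

variable {𝕜 ι κ L : Type*} [RCLike 𝕜] [Fintype ι] [DecidableEq ι] [Fintype κ] [DecidableEq κ]
  [Fintype L]

/-- The squared distance of the two marginals `∑ A_ℓ A_ℓᴴ` and `∑ A_ℓᴴ A_ℓ` of a matrix family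
from `c • 1`, in the Frobenius norm. -/
noncomputable def scalingDefect (c : ℝ) (A : L → Matrix ι κ 𝕜) : ℝ :=
  ‖∑ ℓ, A ℓ * (A ℓ)ᴴ - (c : 𝕜) • 1‖ ^ 2 + ‖∑ ℓ, (A ℓ)ᴴ * A ℓ - (c : 𝕜) • 1‖ ^ 2

/-- `(c, c)`-scalability of a matrix family under the action `A_ℓ ↦ g A_ℓ hᴴ`. -/
def IsScalable (c : ℝ) (A : L → Matrix ι κ 𝕜) : Prop :=
  ∀ ε : ℝ, 0 < ε → ∃ (g : GL ι 𝕜) (h : GL κ 𝕜),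
    scalingDefect c (fun ℓ => g.val * A ℓ * h.valᴴ) ≤ ε ^ 2

lemma continuous_scalingDefect (c : ℝ) :
    Continuous (scalingDefect c : (L → Matrix ι κ 𝕜) → ℝ) := by
  unfold scalingDefect
  fun_prop

lemma isScalable_of_tendsto {α : Type*} {F : Filter α} [F.NeBot] {c : ℝ} {A B : L → Matrix ι κ 𝕜}
    (g : α → GL ι 𝕜) (h : α → GL κ 𝕜)
    (hlim : ∀ ℓ, Tendsto (fun t => (g t).val * A ℓ * (h t).valᴴ) F (𝓝 (B ℓ)))
    (hB : IsScalable c B) : IsScalable c A := by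
  intro ε hε
  obtain ⟨g₀, h₀, hdefect⟩ := hB (ε / 2) (half_pos hε)
  have hlt : scalingDefect c (fun ℓ => g₀.val * B ℓ * h₀.valᴴ) < ε ^ 2 := by nlinarith
  have htendsto : Tendsto (fun t ℓ => g₀.val * ((g t).val * A ℓ * (h t).valᴴ) * h₀.valᴴ) F
      (𝓝 fun ℓ => g₀.val * B ℓ * h₀.valᴴ) :=
    tendsto_pi_nhds.2 fun ℓ =>
      Continuous.tendsto (f := fun M => g₀.val * M * h₀.valᴴ) (by fun_prop) _ |>.comp (hlim ℓ)
  obtain ⟨t, ht⟩ :=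
    (((continuous_scalingDefect c).tendsto _).comp htendsto |>.eventually_lt_const hlt).exists
  refine ⟨g₀ * g t, h₀ * h t, le_of_eq_of_le ?_ ht.le⟩
  simp only [Function.comp_apply, Units.val_mul, conjTranspose_mul, Matrix.mul_assoc]

lemma isScalable_of_mul_mul {c : ℝ} {A : L → Matrix ι κ 𝕜} (g : GL ι 𝕜) (h : GL κ 𝕜)
    (hgh : IsScalable c fun ℓ => g.val * A ℓ * h.valᴴ) : IsScalable c A :=
  isScalable_of_tendsto (F := pure ()) (fun _ => g) (fun _ => h) (fun _ => tendsto_const_nhds) hgh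

end Scalability

section Diagonal

variable {𝕜 ι L : Type*} [RCLike 𝕜] [Fintype ι] [DecidableEq ι]

/-- The invertible matrix `diag (exp (x i))`. Being Hermitian, it can act from either side in
`A_ℓ ↦ g A_ℓ hᴴ`, and `t ↦ diagonalExp 𝕜 (t • x)` is a one-parameter group. -/
noncomputable def diagonalExp (𝕜 : Type*) [RCLike 𝕜] (x : ι → ℝ) : GL ι 𝕜 where
  val := diagonal fun i => (Real.exp (x i) : 𝕜)
  inv := diagonal fun i => (Real.exp (-x i) : 𝕜)
  val_inv := by simp [← RCLike.ofReal_mul, ← Real.exp_add]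
  inv_val := by simp [← RCLike.ofReal_mul, ← Real.exp_add]

lemma val_diagonalExp (x : ι → ℝ) :
    (diagonalExp 𝕜 x).val = diagonal fun i => (Real.exp (x i) : 𝕜) :=
  rfl

lemma conjTranspose_val_diagonalExp (x : ι → ℝ) :
    (diagonalExp 𝕜 x).valᴴ = diagonal fun i => (Real.exp (x i) : 𝕜) := by
  simp [val_diagonalExp, diagonal_conjTranspose, Pi.star_def]

variable [Fintype L]

lemma scalingDefect_diagonal {c : ℝ} {b : L → ι → 𝕜} (hb : ∀ i, ∑ ℓ, ‖b ℓ i‖ ^ 2 = c) :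
    scalingDefect c (fun ℓ => diagonal (b ℓ)) = 0 := by
  have hleft : ∑ ℓ, diagonal (b ℓ) * (diagonal (b ℓ))ᴴ = (c : 𝕜) • (1 : Matrix ι ι 𝕜) := by
    ext i j
    obtain rfl | hij := eq_or_ne i j
    · simp [Matrix.sum_apply, RCLike.mul_conj, ← hb i]
    · simp [Matrix.sum_apply, hij]
  have hright : ∑ ℓ, (diagonal (b ℓ))ᴴ * diagonal (b ℓ) = (c : 𝕜) • (1 : Matrix ι ι 𝕜) := by
    simp only [← hleft, diagonal_conjTranspose, diagonal_mul_diagonal, mul_comm]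
  rw [scalingDefect, hleft, hright]
  simp

lemma isScalable_diagonal {c : ℝ} (hc : 0 < c) {b : L → ι → 𝕜} (hb : ∀ i, ∃ ℓ, b ℓ i ≠ 0) :
    IsScalable c (fun ℓ => diagonal (b ℓ)) := by
  intro ε _
  have hpos : ∀ i, 0 < ∑ ℓ, ‖b ℓ i‖ ^ 2 := fun i => by
    obtain ⟨ℓ, hℓ⟩ := hb i
    exact Finset.sum_pos' (fun _ _ => by positivity) ⟨ℓ, Finset.mem_univ ℓ, by positivity⟩
  let x : ι → ℝ := fun i => Real.log (c / ∑ ℓ, ‖b ℓ i‖ ^ 2) / 2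
  have hx : ∀ i, Real.exp (x i) ^ 2 = c / ∑ ℓ, ‖b ℓ i‖ ^ 2 := fun i => by
    rw [← Real.exp_nat_mul, Nat.cast_ofNat, mul_div_cancel₀ _ two_ne_zero,
      Real.exp_log (div_pos hc (hpos i))]
  refine ⟨diagonalExp 𝕜 x, 1, le_of_eq_of_le ?_ (sq_nonneg ε)⟩
  simp only [val_diagonalExp, Units.val_one, conjTranspose_one, Matrix.mul_one,
    diagonal_mul_diagonal]
  refine scalingDefect_diagonal fun i => ?_
  simp only [norm_mul, mul_pow, RCLike.norm_ofReal, sq_abs, ← Finset.mul_sum, hx]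
  exact div_mul_cancel₀ _ (hpos i).ne'

lemma diagonalExp_mul_mul_diagonalExp_apply (x y : ι → ℝ) (T : Matrix ι ι 𝕜) (i j : ι) :
    ((diagonalExp 𝕜 x).val * T * (diagonalExp 𝕜 y).valᴴ) i j =
      (Real.exp (x i + y j) : 𝕜) * T i j := by
  rw [conjTranspose_val_diagonalExp, mul_diagonal, val_diagonalExp, diagonal_mul, mul_right_comm,
    ← RCLike.ofReal_mul, ← Real.exp_add]

lemma tendsto_diagonalExp_mul_mul_diagonalExp {w : ι → ℝ} (hw : w.Injective) {T : Matrix ι ι 𝕜}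
    (hT : T.BlockTriangular w) :
    Tendsto (fun t : ℝ => (diagonalExp 𝕜 (t • w)).val * T * (diagonalExp 𝕜 (-t • w)).valᴴ)
      atTop (𝓝 (diagonal T.diag)) := by
  refine tendsto_pi_nhds.2 fun i => tendsto_pi_nhds.2 fun j => ?_
  have hentry : ∀ t : ℝ, ((diagonalExp 𝕜 (t • w)).val * T * (diagonalExp 𝕜 (-t • w)).valᴴ) i j =
      (Real.exp (t * (w i - w j)) : 𝕜) * T i j := fun t => by
    rw [diagonalExp_mul_mul_diagonalExp_apply]
    simp only [Pi.smul_apply, smul_eq_mul]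
    ring_nf
  refine Tendsto.congr (fun t => (hentry t).symm) ?_
  rcases lt_trichotomy (w i) (w j) with hij | hij | hij
  · have hexp : Tendsto (fun t : ℝ => Real.exp (t * (w i - w j))) atTop (𝓝 0) :=
      Real.tendsto_exp_atBot.comp (tendsto_id.atTop_mul_const_of_neg (sub_neg.2 hij))
    rw [diagonal_apply_ne _ (ne_of_apply_ne w hij.ne)]
    simpa using ((RCLike.continuous_ofReal (K := 𝕜)).tendsto 0 |>.comp hexp).mul_const (T i j)
  · simp [hw hij]
  · simp [hT hij, ne_of_apply_ne w hij.ne']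

lemma isScalable_of_blockTriangular {c : ℝ} (hc : 0 < c) {w : ι → ℝ} (hw : w.Injective)
    {T : L → Matrix ι ι 𝕜} (hT : ∀ ℓ, (T ℓ).BlockTriangular w) (hdiag : ∀ i, ∃ ℓ, T ℓ i i ≠ 0) :
    IsScalable c T :=
  isScalable_of_tendsto _ _ (fun ℓ => tendsto_diagonalExp_mul_mul_diagonalExp hw (hT ℓ))
    (isScalable_diagonal hc hdiag)

lemma isScalable_pair_one_sub_smul {c : ℝ} (hc : 0 < c) (s : 𝕜) {n : ℕ}
    {T : Matrix (Fin n) (Fin n) 𝕜} (hT : T.BlockTriangular OrderDual.toDual) :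
    IsScalable c ![T, 1 - s • T] := by
  have hw : Function.Injective fun i : Fin n => -((i : ℕ) : ℝ) :=
    neg_injective.comp (Nat.cast_injective.comp Fin.val_injective)
  refine isScalable_of_blockTriangular hc hw (fun ℓ i j hji => ?_) fun i => ?_
  · have hij : i < j := by simpa using hji
    fin_cases ℓ
    · exact hT hij
    · simp [hT hij, hij.ne]
  · by_cases hTi : T i i = 0
    · exact ⟨1, by simp [hTi]⟩
    · exact ⟨0, hTi⟩

end Diagonal

section Triangularization

variable {K V : Type*} [Field K] [IsAlgClosed K] [AddCommGroup V] [Module K V]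
  [FiniteDimensional K V]

lemma exists_dual_ne_zero_comp_eq_smul [Nontrivial V] (f : End K V) :
    ∃ φ : Dual K V, φ ≠ 0 ∧ ∃ μ : K, ∀ x, φ (f x) = μ * φ x := by
  obtain ⟨μ, hμ⟩ := End.exists_eigenvalue (LinearMap.dualMap f : End K (Dual K V))
  obtain ⟨φ, hφ⟩ := hμ.exists_hasEigenvector
  exact ⟨φ, hφ.2, μ, fun x => by simpa using LinearMap.congr_fun hφ.apply_eq_smul x⟩

lemma exists_basis_apply_mem_span_image_Ici {n : ℕ} (hn : finrank K V = n) (f : End K V) :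
    ∃ b : Basis (Fin n) K V, ∀ j, f (b j) ∈ Submodule.span K (b '' Set.Ici j) := by
  induction n generalizing V with
  | zero => exact ⟨finBasisOfFinrankEq K V hn, fun j => j.elim0⟩
  | succ n ih =>
    have : Nontrivial V := nontrivial_of_finrank_pos (R := K) (by lia)
    obtain ⟨φ, hφ, μ, hφf⟩ := exists_dual_ne_zero_comp_eq_smul f
    have hinvariant : ∀ x ∈ LinearMap.ker φ, f x ∈ LinearMap.ker φ := fun x hx => by
      simp_all
    have hfinrank : finrank K (LinearMap.ker φ) = n := by
      have := Dual.finrank_ker_add_one_of_ne_zero hφ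
      lia
    obtain ⟨b, hb⟩ := ih hfinrank (f.restrict hinvariant)
    obtain ⟨y, hy⟩ := DFunLike.ne_iff.1 hφ
    have hy : φ y ≠ 0 := hy
    let b' : Basis (Fin (n + 1)) K V := .mkFinCons y b
      (fun a x hx hax => by simpa [LinearMap.mem_ker.1 hx, hy] using congrArg φ hax)
      (fun z => ⟨-(φ z / φ y), by simp [hy]⟩)
    have hb'succ : ∀ i : Fin n, b' i.succ = b i := fun i => by simp [b']
    refine ⟨b', Fin.cases ?_ fun j => ?_⟩
    · have hIci : Set.Ici (0 : Fin (n + 1)) = Set.univ := Set.Ici_bot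
      simp [hIci, b'.span_eq]
    · have hmem := Submodule.mem_map_of_mem (f := (LinearMap.ker φ).subtype) (hb j)
      rw [Submodule.map_span, ← Set.image_comp] at hmem
      rw [hb'succ]
      refine Submodule.span_mono ?_ hmem
      rintro _ ⟨i, hi, rfl⟩
      exact ⟨i.succ, Fin.succ_le_succ_iff.2 hi, hb'succ i⟩

lemma exists_GL_conj_blockTriangular_toDual {n : ℕ} (M : Matrix (Fin n) (Fin n) K) :
    ∃ P : GL (Fin n) K, (P⁻¹.val * M * P.val).BlockTriangular OrderDual.toDual := by
  obtain ⟨b, hb⟩ := exists_basis_apply_mem_span_image_Ici (finrank_fin_fun K) (toLin' M)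
  let e := Pi.basisFun K (Fin n)
  refine ⟨⟨e.toMatrix b, b.toMatrix e, e.toMatrix_mul_toMatrix_flip b,
    b.toMatrix_mul_toMatrix_flip e⟩, fun i j hij => ?_⟩
  have hconj : b.toMatrix e * M * e.toMatrix b = LinearMap.toMatrix b b (toLin' M) := by
    simpa [e, LinearMap.toMatrix_eq_toMatrix'] using
      basis_toMatrix_mul_linearMap_toMatrix_mul_basis_toMatrix b e b e (toLin' M)
  change (b.toMatrix e * M * e.toMatrix b) i j = 0
  rw [hconj, LinearMap.toMatrix_apply]
  by_contra hne
  exact (b.mem_span_image.1 (hb j) (Finsupp.mem_support_iff.2 hne)).not_gt hij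

end Triangularization

section ShrunkSubspace

variable {K V W : Type*} [Field K] [AddCommGroup V] [Module K V] [FiniteDimensional K V]
  [AddCommGroup W] [Module K W]

lemma exists_linearIndependent_mem_span_range (w : ℕ → V) :
    ∃ k : ℕ, LinearIndependent K (fun i : Fin k => w i) ∧
      w k ∈ Submodule.span K (Set.range fun i : Fin k => w i) := by
  by_contra! hnot
  have hindep : ∀ k : ℕ, LinearIndependent K (fun i : Fin k => w i) := fun k => by
    induction k with
    | zero => exact linearIndependent_empty_type
    | succ k ih => exact linearIndependent_finSucc'.2 ⟨ih, hnot k ih⟩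
  simpa using (hindep (finrank K V + 1)).fintype_card_le_finrank

lemma finrank_map_lt_of_mem_ker {f : V →ₗ[K] W} {U : Submodule K V} {x : V} (hxU : x ∈ U)
    (hx : x ≠ 0) (hfx : f x = 0) : finrank K (U.map f) < finrank K U := by
  have hker : 0 < finrank K (LinearMap.ker (f.domRestrict U)) :=
    finrank_pos_iff_exists_ne_zero.2 ⟨⟨⟨x, hxU⟩, hfx⟩, by simpa [← Subtype.coe_inj] using hx⟩
  have hrank := (f.domRestrict U).finrank_range_add_finrank_ker
  rw [LinearMap.range_domRestrict] at hrank
  lia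

lemma exists_finrank_map_sup_map_lt [Infinite K] {f g : V →ₗ[K] W}
    (hfg : ∀ s : K, LinearMap.ker (s • f + g) ≠ ⊥) :
    ∃ U : Submodule K V, finrank K (U.map f ⊔ U.map g : Submodule K W) < finrank K U := by
  let s : ℕ ↪ K := Infinite.natEmbedding K
  choose w hw hw0 using fun k => (Submodule.ne_bot_iff _).1 (hfg (s k))
  have hgw : ∀ k, g (w k) = -(s k • f (w k)) := fun k =>
    eq_neg_of_add_eq_zero_right (by simpa using hw k)
  obtain ⟨k, hindep, hmem⟩ := exists_linearIndependent_mem_span_range (K := K) w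
  obtain ⟨a, ha⟩ := (Submodule.mem_span_range_iff_exists_fun K).1 hmem
  let U := Submodule.span K (Set.range fun i : Fin k => w i)
  have hwU : ∀ i : Fin k, w i ∈ U := fun i => Submodule.subset_span ⟨i, rfl⟩
  have hgU : U.map g ≤ U.map f := by
    rw [Submodule.map_span_le]
    rintro _ ⟨i, rfl⟩
    rw [hgw]
    exact neg_mem (Submodule.smul_mem _ _ (Submodule.mem_map_of_mem (hwU i)))
  -- `f x` is `s k • f + g` applied to the relation `∑ i, a i • w i = w k`.
  let x := ∑ i : Fin k, (a i * (s k - s i)) • w i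
  have hfx : f x = 0 := by
    have hfwk : s k • f (w k) + g (w k) = 0 := by simpa using hw k
    rw [← ha] at hfwk
    simp only [map_sum, map_smul, hgw, Finset.smul_sum, ← Finset.sum_add_distrib] at hfwk
    simp only [x, map_sum, map_smul, ← hfwk]
    exact Finset.sum_congr rfl fun i _ => by module
  have hx : x ≠ 0 := fun hx0 => hw0 k <| by
    have hcoeff := Fintype.linearIndependent_iff.1 hindep _ hx0
    have ha0 : ∀ i, a i = 0 := fun i => (mul_eq_zero.1 (hcoeff i)).resolve_right <|
      sub_ne_zero.2 (s.injective.ne i.2.ne')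
    simp [← ha, ha0]
  refine ⟨U, ?_⟩
  rw [sup_eq_left.2 hgU]
  exact finrank_map_lt_of_mem_ker
    (Submodule.sum_mem _ fun i _ => Submodule.smul_mem _ _ (hwU i)) hx hfx

end ShrunkSubspace

section Obstruction

variable {𝕜 : Type*} [RCLike 𝕜]

lemma sum_norm_sq_apply_le_sum_norm_sq_adjoint {E F α β : Type*}
    [NormedAddCommGroup E] [InnerProductSpace 𝕜 E] [FiniteDimensional 𝕜 E]
    [NormedAddCommGroup F] [InnerProductSpace 𝕜 F] [FiniteDimensional 𝕜 F]
    [Fintype α] [Fintype β] {e : α → E} (he : Orthonormal 𝕜 e) {W : Submodule 𝕜 F}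
    (f : OrthonormalBasis β 𝕜 W) {T : E →ₗ[𝕜] F} (hT : ∀ i, T (e i) ∈ W) :
    ∑ i, ‖T (e i)‖ ^ 2 ≤ ∑ j, ‖T.adjoint (f j)‖ ^ 2 := by
  have hparseval : ∀ i, ‖T (e i)‖ ^ 2 = ∑ j, ‖inner 𝕜 (e i) (T.adjoint (f j))‖ ^ 2 := fun i => by
    simpa [LinearMap.adjoint_inner_right] using (f.sum_sq_norm_inner_left ⟨T (e i), hT i⟩).symm
  calc ∑ i, ‖T (e i)‖ ^ 2
      = ∑ j, ∑ i, ‖inner 𝕜 (e i) (T.adjoint (f j))‖ ^ 2 := by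
        simp only [hparseval]
        exact Finset.sum_comm
    _ ≤ ∑ j, ‖T.adjoint (f j)‖ ^ 2 := Finset.sum_le_sum fun j _ => he.sum_inner_products_le _

variable {ι κ L : Type*} [Fintype ι] [Fintype κ] [DecidableEq κ] [Fintype L]

lemma norm_toEuclideanLin_apply_le (M : Matrix ι κ 𝕜) (x : EuclideanSpace 𝕜 κ) :
    ‖toEuclideanLin M x‖ ≤ ‖M‖ * ‖x‖ := by
  simpa [← replicateCol_mulVec, frobenius_norm_replicateCol, toLpLin_apply] using
    frobenius_norm_mul M (replicateCol Unit x.ofLp)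

lemma sum_norm_sq_toEuclideanLin_eq_inner (A : L → Matrix ι κ 𝕜) (x : EuclideanSpace 𝕜 κ) :
    ((∑ ℓ, ‖toEuclideanLin (A ℓ) x‖ ^ 2 : ℝ) : 𝕜) =
      inner 𝕜 x (toEuclideanLin (∑ ℓ, (A ℓ)ᴴ * A ℓ) x) := by
  classical
  have hterm : ∀ ℓ, inner 𝕜 x (toEuclideanLin ((A ℓ)ᴴ * A ℓ) x) =
      (‖toEuclideanLin (A ℓ) x‖ : 𝕜) ^ 2 := fun ℓ => by
    rw [toLpLin_mul_same, toEuclideanLin_conjTranspose_eq_adjoint, LinearMap.comp_apply,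
      LinearMap.adjoint_inner_right, inner_self_eq_norm_sq_to_K]
  simp only [map_sum, map_pow, LinearMap.sum_apply, inner_sum, hterm]

lemma abs_sum_norm_sq_toEuclideanLin_sub_le (A : L → Matrix ι κ 𝕜) (c : ℝ)
    {x : EuclideanSpace 𝕜 κ} (hx : ‖x‖ = 1) :
    |∑ ℓ, ‖toEuclideanLin (A ℓ) x‖ ^ 2 - c| ≤ ‖∑ ℓ, (A ℓ)ᴴ * A ℓ - (c : 𝕜) • 1‖ := by
  set M : Matrix κ κ 𝕜 := ∑ ℓ, (A ℓ)ᴴ * A ℓ - (c : 𝕜) • 1 with hM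
  have hinner : ((∑ ℓ, ‖toEuclideanLin (A ℓ) x‖ ^ 2 - c : ℝ) : 𝕜) =
      inner 𝕜 x (toEuclideanLin M x) := by
    rw [RCLike.ofReal_sub, sum_norm_sq_toEuclideanLin_eq_inner, hM, map_sub, map_smul,
      LinearMap.sub_apply, LinearMap.smul_apply, inner_sub_right, inner_smul_right, toLpLin_one,
      LinearMap.id_apply, inner_self_eq_norm_sq_to_K, hx]
    simp
  calc |∑ ℓ, ‖toEuclideanLin (A ℓ) x‖ ^ 2 - c|
      = ‖inner 𝕜 x (toEuclideanLin M x)‖ := by rw [← hinner, RCLike.norm_ofReal]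
    _ ≤ ‖x‖ * ‖toEuclideanLin M x‖ := norm_inner_le_norm _ _
    _ ≤ ‖x‖ * (‖M‖ * ‖x‖) := by gcongr; exact norm_toEuclideanLin_apply_le M x
    _ = ‖M‖ := by rw [hx, one_mul, mul_one]

lemma abs_sum_sum_norm_sq_toEuclideanLin_sub_le {α : Type*} [Fintype α] (A : L → Matrix ι κ 𝕜)
    (c : ℝ) {e : α → EuclideanSpace 𝕜 κ} (he : ∀ i, ‖e i‖ = 1) :
    |∑ ℓ, ∑ i, ‖toEuclideanLin (A ℓ) (e i)‖ ^ 2 - Fintype.card α * c| ≤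
      Fintype.card α * ‖∑ ℓ, (A ℓ)ᴴ * A ℓ - (c : 𝕜) • 1‖ := by
  calc |∑ ℓ, ∑ i, ‖toEuclideanLin (A ℓ) (e i)‖ ^ 2 - Fintype.card α * c|
      = |∑ i, (∑ ℓ, ‖toEuclideanLin (A ℓ) (e i)‖ ^ 2 - c)| := by
        rw [Finset.sum_comm, Finset.sum_sub_distrib, Finset.sum_const, Finset.card_univ,
          nsmul_eq_mul]
    _ ≤ ∑ i, |∑ ℓ, ‖toEuclideanLin (A ℓ) (e i)‖ ^ 2 - c| := Finset.abs_sum_le_sum_abs _ _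
    _ ≤ ∑ _i : α, ‖∑ ℓ, (A ℓ)ᴴ * A ℓ - (c : 𝕜) • 1‖ :=
        Finset.sum_le_sum fun i _ => abs_sum_norm_sq_toEuclideanLin_sub_le A c (he i)
    _ = Fintype.card α * ‖∑ ℓ, (A ℓ)ᴴ * A ℓ - (c : 𝕜) • 1‖ := by
        rw [Finset.sum_const, Finset.card_univ, nsmul_eq_mul]

variable [DecidableEq ι]

lemma finrank_mul_sub_le_finrank_mul_add {A : L → Matrix ι κ 𝕜} {c ε : ℝ} (hε : 0 ≤ ε)
    (hA : scalingDefect c A ≤ ε ^ 2) {V : Submodule 𝕜 (EuclideanSpace 𝕜 κ)}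
    {W : Submodule 𝕜 (EuclideanSpace 𝕜 ι)} (hVW : ∀ ℓ, V ≤ W.comap (toEuclideanLin (A ℓ))) :
    finrank 𝕜 V * (c - ε) ≤ finrank 𝕜 W * (c + ε) := by
  have hleft : ‖∑ ℓ, A ℓ * (A ℓ)ᴴ - (c : 𝕜) • 1‖ ≤ ε :=
    le_of_sq_le_sq (le_trans (le_add_of_nonneg_right (sq_nonneg _)) hA) hε
  have hright : ‖∑ ℓ, (A ℓ)ᴴ * A ℓ - (c : 𝕜) • 1‖ ≤ ε :=
    le_of_sq_le_sq (le_trans (le_add_of_nonneg_left (sq_nonneg _)) hA) hε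
  let e := stdOrthonormalBasis 𝕜 V
  let f := stdOrthonormalBasis 𝕜 W
  have he : Orthonormal 𝕜 fun i => (e i : EuclideanSpace 𝕜 κ) :=
    e.orthonormal.comp_linearIsometry V.subtypeₗᵢ
  have hf : Orthonormal 𝕜 fun j => (f j : EuclideanSpace 𝕜 ι) :=
    f.orthonormal.comp_linearIsometry W.subtypeₗᵢ
  have hlower := neg_le_of_abs_le (abs_sum_sum_norm_sq_toEuclideanLin_sub_le A c he.1)
  have hbessel : ∑ ℓ, ∑ i, ‖toEuclideanLin (A ℓ) (e i)‖ ^ 2 ≤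
      ∑ ℓ, ∑ j, ‖toEuclideanLin (A ℓ)ᴴ (f j)‖ ^ 2 := Finset.sum_le_sum fun ℓ _ => by
    rw [toEuclideanLin_conjTranspose_eq_adjoint]
    exact sum_norm_sq_apply_le_sum_norm_sq_adjoint he f fun i => hVW ℓ (e i).2
  have hupper := le_of_abs_le
    (abs_sum_sum_norm_sq_toEuclideanLin_sub_le (fun ℓ => (A ℓ)ᴴ) c hf.1)
  simp only [conjTranspose_conjTranspose, Fintype.card_fin] at hlower hupper
  have hV := mul_le_mul_of_nonneg_left hright (finrank 𝕜 V).cast_nonneg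
  have hW := mul_le_mul_of_nonneg_left hleft (finrank 𝕜 W).cast_nonneg
  linarith

lemma le_two_mul_card_mul_of_finrank_lt {A : L → Matrix ι κ 𝕜} {c ε : ℝ} (hc : 0 ≤ c) (hε : 0 ≤ ε)
    (hA : scalingDefect c A ≤ ε ^ 2) {V : Submodule 𝕜 (EuclideanSpace 𝕜 κ)}
    {W : Submodule 𝕜 (EuclideanSpace 𝕜 ι)} (hVW : ∀ ℓ, V ≤ W.comap (toEuclideanLin (A ℓ)))
    (hlt : finrank 𝕜 W < finrank 𝕜 V) : c ≤ 2 * Fintype.card κ * ε := by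
  have hbound := finrank_mul_sub_le_finrank_mul_add hε hA hVW
  have hWV : (finrank 𝕜 W : ℝ) + 1 ≤ finrank 𝕜 V := mod_cast hlt
  have hVκ : (finrank 𝕜 V : ℝ) ≤ Fintype.card κ := mod_cast
    V.finrank_le.trans_eq finrank_euclideanSpace
  nlinarith

lemma IsScalable.finrank_le {A : L → Matrix ι κ 𝕜} {c : ℝ} (hA : IsScalable c A) (hc : 0 < c)
    {V : Submodule 𝕜 (EuclideanSpace 𝕜 κ)} {W : Submodule 𝕜 (EuclideanSpace 𝕜 ι)}
    (hVW : ∀ ℓ, V ≤ W.comap (toEuclideanLin (A ℓ))) : finrank 𝕜 V ≤ finrank 𝕜 W := by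
  by_contra! hlt
  set ε : ℝ := c / (2 * Fintype.card κ + 1)
  have hε : 0 < ε := by positivity
  have hcε : c = (2 * Fintype.card κ + 1) * ε := (mul_div_cancel₀ c (by positivity)).symm
  obtain ⟨g, h, hgh⟩ := hA ε hε
  let V' := V.comap (toEuclideanLin h.valᴴ)
  let W' := W.map (toEuclideanLin g.val)
  have hV'W' : ∀ ℓ, V' ≤ W'.comap (toEuclideanLin (g.val * A ℓ * h.valᴴ)) := fun ℓ x hx => by
    rw [Submodule.mem_comap, toLpLin_mul_same, toLpLin_mul_same]
    exact Submodule.mem_map_of_mem (hVW ℓ hx)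
  have hsurj : Function.Surjective (toEuclideanLin h.valᴴ) := fun y =>
    ⟨toEuclideanLin (h⁻¹).valᴴ y, by
      rw [← LinearMap.comp_apply, ← toLpLin_mul_same, ← conjTranspose_mul, ← Units.val_mul,
        inv_mul_cancel]
      simp⟩
  have hV' : finrank 𝕜 V ≤ finrank 𝕜 V' := by
    have hmap : V'.map (toEuclideanLin h.valᴴ) = V := Submodule.map_comap_eq_of_surjective hsurj V
    exact hmap ▸ Submodule.finrank_map_le (toEuclideanLin h.valᴴ) V'
  have hW' : finrank 𝕜 W' ≤ finrank 𝕜 W := Submodule.finrank_map_le _ W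
  have hbound :=
    le_two_mul_card_mul_of_finrank_lt hc.le hε.le hgh hV'W' (hW'.trans_lt (hlt.trans_le hV'))
  linarith

end Obstruction

section Pencil

variable {n : ℕ} {A₁ A₂ : Matrix (Fin n) (Fin n) ℂ} {c : ℝ}

lemma isScalable_of_det_ne_zero (hc : 0 < c) {s : ℂ} (hs : (s • A₁ + A₂).det ≠ 0) :
    IsScalable c ![A₁, A₂] := by
  let S : GL (Fin n) ℂ := .mkOfDetNeZero _ hs
  obtain ⟨P, hT⟩ := exists_GL_conj_blockTriangular_toDual ((S⁻¹).val * A₁)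
  set T := (P⁻¹).val * ((S⁻¹).val * A₁) * P.val with hT_def
  have hA₂ : (P⁻¹).val * ((S⁻¹).val * A₂) * P.val = 1 - s • T := by
    have hS : A₂ = S.val - s • A₁ := (add_sub_cancel_left _ _).symm
    rw [hS, hT_def]
    simp [mul_sub, sub_mul]
  have hpair : (fun ℓ => (P⁻¹ * S⁻¹).val * ![A₁, A₂] ℓ * (star P).valᴴ) = ![T, 1 - s • T] := by
    funext ℓ
    fin_cases ℓ
    · simp [hT_def, Matrix.mul_assoc, star_eq_conjTranspose]
    · simp [← hA₂, Matrix.mul_assoc, star_eq_conjTranspose]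
  apply isScalable_of_mul_mul (P⁻¹ * S⁻¹) (star P)
  rw [hpair]
  exact isScalable_pair_one_sub_smul hc s hT

lemma exists_det_ne_zero_of_isScalable (hc : 0 < c) (hA : IsScalable c ![A₁, A₂]) :
    ∃ s : ℂ, (s • A₁ + A₂).det ≠ 0 := by
  by_contra! hdet
  have hker : ∀ s : ℂ, LinearMap.ker (s • toEuclideanLin A₁ + toEuclideanLin A₂) ≠ ⊥ := fun s => by
    obtain ⟨v, hv, hAv⟩ := exists_mulVec_eq_zero_iff.2 (hdet s)
    rw [← map_smul, ← map_add, Submodule.ne_bot_iff]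
    exact ⟨WithLp.toLp 2 v, by rw [LinearMap.mem_ker, toLpLin_apply, hAv, WithLp.toLp_zero],
      by simpa using hv⟩
  obtain ⟨U, hU⟩ := exists_finrank_map_sup_map_lt hker
  refine hU.not_ge (hA.finrank_le hc fun ℓ => Submodule.map_le_iff_le_comap.1 ?_)
  fin_cases ℓ
  exacts [le_sup_left, le_sup_right]

end Pencil

theorem pencil_regular_iff_scalable_general {n m : ℕ} {c : ℝ} (hc : 0 < c)
    (A₁ A₂ : Matrix (Fin n) (Fin m) ℂ) :
    (∃ hnm : n = m, ∃ s : ℂ, ((s • A₁ + A₂).submatrix id (Fin.cast hnm)).det ≠ 0) ↔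
      n = m ∧ IsScalable c ![A₁, A₂] := by
  constructor
  · rintro ⟨rfl, s, hs⟩
    exact ⟨rfl, isScalable_of_det_ne_zero hc hs⟩
  · rintro ⟨rfl, hA⟩
    exact ⟨rfl, exists_det_ne_zero_of_isScalable hc hA⟩

/-- Regularity of a matrix pencil is equivalent to operator scalability
(Corollary 4.23): for `n×m` complex matrices `A₁, A₂` with
`ker A₁ ∩ ker A₂ = {0}` and `ker A₁ᴴ ∩ ker A₂ᴴ = {0}`, the pencil `sA₁ + A₂` is
regular — i.e. `n = m` and `det(sA₁ + A₂) ≠ 0` for some `s ∈ ℂ` (the determinant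
taken after identifying `Fin n` with `Fin m` via the equality `n = m`) — if and
only if `n = m` and the pair `(A₁, A₂)` is `(1/n, 1/n)`-scalable: for every
`ε > 0` there are `g, h ∈ GL_n(ℂ)` with
`‖Σ_ℓ g A_ℓ hᴴ h A_ℓᴴ gᴴ − (1/n)·Iₙ‖² + ‖Σ_ℓ h A_ℓᴴ gᴴ g A_ℓ hᴴ − (1/n)·Iₙ‖² ≤ ε²`. -/
theorem pencil_regular_iff_scalable {n m : ℕ} (hn : 1 ≤ n) (hm : 1 ≤ m)
    (A₁ A₂ : Matrix (Fin n) (Fin m) ℂ)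
    (hker : LinearMap.ker A₁.mulVecLin ⊓ LinearMap.ker A₂.mulVecLin = ⊥)
    (hker' : LinearMap.ker (A₁ᴴ).mulVecLin ⊓ LinearMap.ker (A₂ᴴ).mulVecLin = ⊥) :
    (∃ hnm : n = m, ∃ s : ℂ,
        ((s • A₁ + A₂).submatrix id (Fin.cast hnm)).det ≠ 0) ↔
    (n = m ∧ ∀ ε : ℝ, 0 < ε → ∃ (g : GL (Fin n) ℂ) (h : GL (Fin m) ℂ),
      (frobNorm (((g : Matrix (Fin n) (Fin n) ℂ) * A₁ * ((h : Matrix (Fin m) (Fin m) ℂ))ᴴ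
            * (h : Matrix (Fin m) (Fin m) ℂ) * A₁ᴴ * ((g : Matrix (Fin n) (Fin n) ℂ))ᴴ
          + (g : Matrix (Fin n) (Fin n) ℂ) * A₂ * ((h : Matrix (Fin m) (Fin m) ℂ))ᴴ
            * (h : Matrix (Fin m) (Fin m) ℂ) * A₂ᴴ * ((g : Matrix (Fin n) (Fin n) ℂ))ᴴ)
          - ((n : ℂ))⁻¹ • (1 : Matrix (Fin n) (Fin n) ℂ))) ^ 2
      + (frobNorm (((h : Matrix (Fin m) (Fin m) ℂ) * A₁ᴴ * ((g : Matrix (Fin n) (Fin n) ℂ))ᴴ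
            * (g : Matrix (Fin n) (Fin n) ℂ) * A₁ * ((h : Matrix (Fin m) (Fin m) ℂ))ᴴ
          + (h : Matrix (Fin m) (Fin m) ℂ) * A₂ᴴ * ((g : Matrix (Fin n) (Fin n) ℂ))ᴴ
            * (g : Matrix (Fin n) (Fin n) ℂ) * A₂ * ((h : Matrix (Fin m) (Fin m) ℂ))ᴴ)
          - ((n : ℂ))⁻¹ • (1 : Matrix (Fin m) (Fin m) ℂ))) ^ 2 ≤ ε ^ 2) := by
  simpa [IsScalable, scalingDefect, frobNorm_eq_norm, Matrix.mul_assoc] using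
    pencil_regular_iff_scalable_general (c := (n : ℝ)⁻¹) (by positivity) A₁ A₂
end
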